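/- (Hasse–Minkowski) Let K be a number field, m ≥ 1, and a₁, …, a_m ∈ Kˣ. Then the quadratic form a₁x₁² + ⋯ + a_mx_m² has a nontrivial zero over K if and only if both of the following hold: (i) for every ring embedding σ : K → ℝ, the real quadratic form σ(a₁)x₁² + ⋯ + σ(a_m)x_m² has a nontrivial zero over ℝ; and (ii) for every finite place v of K, the form a₁x₁² + ⋯ + a_mx_m² has a nontrivial zero over the completion K_v. -/

import Mathlib

open IsDedekindDomain NumberField

/-!
For a nonsquare `a ∈ Kˣ`, the local norms from `K(√a)` at a place `p` form a subgroup of index at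
most two in `K_pˣ`. Comparing these indices with the number of squares among the `S`-units of `K`
and of `K(√a)` gives Hasse's norm theorem: an element of `Kˣ` that is a local norm at every place
is a norm from `K(√a)`. This settles ternary forms. A quaternary form of discriminant `d` is
isotropic over `K(√d)` by the ternary case, and an isotropic vector `u + v√d` there yields one over
`K` in the orthogonal complement of `u` and `v`. In at least five variables, unit forms in three
variables are isotropic at the nondyadic primes, so at almost all places there is nothing to do; at
the remaining ones weak approximation provides a value `c = a₀x² + a₁y²` over `K` such that the form
with `c` in place of the first two terms is still isotropic, and one inducts.
-/

namespace HasseMinkowski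

section SquareClasses

variable {A B C : Type*} [CommGroup A] [CommGroup B] [CommGroup C]

theorem index_range_eq_relIndex_ker_mul (f : A →* A) {W : Subgroup A} (hW : W.index ≠ 0)
    (hfW : W.map f ≤ W) :
    f.range.index = W.relIndex f.ker * (W.map f).relIndex W := by
  have hsup : (W ⊔ f.ker).index ≠ 0 := fun h ↦
    hW <| by rw [← Subgroup.relIndex_mul_index (le_sup_left : W ≤ W ⊔ f.ker), h, mul_zero]
  have hmap : (W.map f).relIndex f.range = (W ⊔ f.ker).index := by
    rw [MonoidHom.range_eq_map, ← Subgroup.relIndex_comap, Subgroup.comap_map_eq,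
      Subgroup.relIndex_top_right]
  have hker : W.relIndex (W ⊔ f.ker) = W.relIndex f.ker := by
    rw [sup_comm, Subgroup.relIndex_sup_right]
  refine Nat.eq_of_mul_eq_mul_left (Nat.pos_of_ne_zero hsup) ?_
  calc (W ⊔ f.ker).index * f.range.index = (W.map f).index := by
        rw [← hmap, Subgroup.relIndex_mul_index (Subgroup.map_le_range f W)]
    _ = (W.map f).relIndex W * (W.relIndex (W ⊔ f.ker) * (W ⊔ f.ker).index) := by
        rw [Subgroup.relIndex_mul_index le_sup_left, Subgroup.relIndex_mul_index hfW]
    _ = (W ⊔ f.ker).index * (W.relIndex f.ker * (W.map f).relIndex W) := by rw [hker]; ring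

theorem square_eq_range : Subgroup.square A = (powMonoidHom 2 : A →* A).range := by
  ext x
  simp only [Subgroup.mem_square, isSquare_iff_exists_sq, MonoidHom.mem_range,
    powMonoidHom_apply, eq_comm]

theorem map_square_le (f : A →* B) : (Subgroup.square A).map f ≤ Subgroup.square B := by
  rintro _ ⟨x, hx, rfl⟩
  exact IsSquare.map f hx

theorem square_le_comap_square (f : A →* B) :
    Subgroup.square A ≤ (Subgroup.square B).comap f :=
  Subgroup.map_le_iff_le_comap.mp (map_square_le f)

theorem relIndex_map_sq (W : Subgroup A) :
    (W.map (powMonoidHom 2)).relIndex W = (Subgroup.square W).index := by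
  have hmap : W.map (powMonoidHom 2) = (Subgroup.square W).map W.subtype := by
    rw [square_eq_range, MonoidHom.map_range]
    ext x
    simp
  rw [hmap]
  exact congrArg Subgroup.index (Subgroup.comap_map_eq_self_of_injective W.subtype_injective _)

theorem index_square_eq_relIndex_ker_mul {W : Subgroup A} (hW : W.index ≠ 0) :
    (Subgroup.square A).index =
      W.relIndex (powMonoidHom 2 : A →* A).ker * (Subgroup.square W).index := by
  have hle : W.map (powMonoidHom 2) ≤ W := by
    rintro _ ⟨x, hx, rfl⟩
    exact W.pow_mem hx 2
  rw [square_eq_range, index_range_eq_relIndex_ker_mul _ hW hle, relIndex_map_sq]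

theorem index_square_congr (e : A ≃* B) :
    (Subgroup.square A).index = (Subgroup.square B).index := by
  rw [← Subgroup.index_map_equiv _ e]
  congr 1
  refine le_antisymm (map_square_le _) fun x hx ↦ ⟨e.symm x, IsSquare.map e.symm hx, by simp⟩

theorem index_square_eq_index_square_ker_mul (f : A →* C) (hf : Function.Surjective f)
    (hC : ∀ c : C, c ^ 2 = 1 → c = 1) :
    (Subgroup.square A).index = (Subgroup.square f.ker).index * (Subgroup.square C).index := by
  have hsup : Subgroup.square A ⊔ f.ker = (Subgroup.square C).comap f := by
    refine le_antisymm (sup_le (square_le_comap_square f) fun x hx ↦ ?_) fun x hx ↦ ?_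
    · simp [MonoidHom.mem_ker.mp hx]
    · obtain ⟨c, hc⟩ := hx
      obtain ⟨y, rfl⟩ := hf c
      rw [← mul_div_cancel (y * y) x]
      exact Subgroup.mul_mem_sup (IsSquare.mul_self y) (by simp [MonoidHom.mem_ker, hc])
  have hker : (Subgroup.square A).relIndex f.ker = (Subgroup.square f.ker).index := by
    rw [Subgroup.relIndex]
    congr 1
    refine le_antisymm (fun x hx ↦ ?_) (square_le_comap_square f.ker.subtype)
    obtain ⟨y, hy⟩ := isSquare_iff_exists_sq _ |>.mp (Subgroup.mem_subgroupOf.mp hx)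
    have hfy : f y ^ 2 = 1 := by rw [← map_pow, ← hy, MonoidHom.mem_ker.mp x.2]
    exact (isSquare_iff_exists_sq x).mpr ⟨⟨y, MonoidHom.mem_ker.mpr (hC _ hfy)⟩, Subtype.ext hy⟩
  rw [← hker, ← Subgroup.index_comap_of_surjective _ hf, ← hsup, ← Subgroup.relIndex_sup_left,
    Subgroup.relIndex_mul_index le_sup_left]

theorem index_square_of_infinite_isCyclic [IsCyclic C] [Infinite C] :
    (Subgroup.square C).index = 2 := by
  rw [← index_square_congr (intCyclicMulEquiv (G := C)), square_eq_range]
  refine (AddSubgroup.index_range_nsmul ℤ 2).trans ?_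
  rw [Module.finrank_self, pow_one]

theorem index_square_eq_two_mul_ker (f : A →* C) [IsCyclic f.range] [Infinite f.range] :
    (Subgroup.square A).index = 2 * (Subgroup.square f.ker).index := by
  have hC : ∀ c : f.range, c ^ 2 = 1 → c = 1 := by
    have e := (intCyclicMulEquiv (G := f.range)).symm
    have := e.injective.isMulTorsionFree e.toMonoidHom
    exact fun c hc ↦ (pow_eq_one_iff_left two_ne_zero).mp hc
  rw [index_square_eq_index_square_ker_mul f.rangeRestrict f.rangeRestrict_surjective hC,
    index_square_of_infinite_isCyclic (C := f.range), MonoidHom.ker_rangeRestrict, mul_comm]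

theorem index_range_mul_index_square_mul_relIndex (i : B →* A) (N : A →* B)
    (hNi : ∀ b, N (i b) = b ^ 2) (hker : ∀ x, N x = 1 → ∃ y b, x = y ^ 2 * i b) :
    N.range.index * (Subgroup.square A).index *
        (Subgroup.square B).relIndex ((Subgroup.square A).comap i) =
      (Subgroup.square B).index ^ 2 := by
  have hsquare : Subgroup.square B = i.range.map N := by
    rw [MonoidHom.map_range, square_eq_range]
    congr 1
    ext b
    simp [hNi]
  have hsup : i.range ⊔ N.ker = Subgroup.square A ⊔ i.range := by
    refine le_antisymm (sup_le le_sup_right fun x hx ↦ ?_) (sup_le ?_ le_sup_left)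
    · obtain ⟨y, b, rfl⟩ := hker x hx
      exact Subgroup.mul_mem_sup (IsSquare.sq y) ⟨b, rfl⟩
    · rintro _ ⟨y, rfl⟩
      rw [← mul_div_cancel (i (N y)) (y * y)]
      exact Subgroup.mul_mem_sup ⟨_, rfl⟩ (by simp [MonoidHom.mem_ker, hNi, sq])
  have hN : (Subgroup.square B).relIndex N.range = (Subgroup.square A ⊔ i.range).index := by
    rw [hsquare, MonoidHom.range_eq_map N, ← Subgroup.relIndex_comap, Subgroup.comap_map_eq,
      Subgroup.relIndex_top_right, hsup]
  have hi : (Subgroup.square A).relIndex (Subgroup.square A ⊔ i.range) =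
      ((Subgroup.square A).comap i).index := by
    rw [Subgroup.relIndex_sup_left, Subgroup.index_comap]
  calc
    _ = N.range.index * (((Subgroup.square A).comap i).index *
          (Subgroup.square B).relIndex N.range) *
          (Subgroup.square B).relIndex ((Subgroup.square A).comap i) := by
      rw [hN, ← hi, Subgroup.relIndex_mul_index le_sup_left]
    _ = ((Subgroup.square B).relIndex N.range * N.range.index) *
          ((Subgroup.square B).relIndex ((Subgroup.square A).comap i) *
            ((Subgroup.square A).comap i).index) := by ring
    _ = _ := by
      rw [Subgroup.relIndex_mul_index (square_le_comap_square i), Subgroup.relIndex_mul_index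
        (hsquare ▸ Subgroup.map_le_range N i.range), sq]

theorem isSquare_units_iff {F : Type*} [Field F] {x : Fˣ} : IsSquare (x : F) ↔ IsSquare x := by
  refine ⟨fun ⟨y, hy⟩ ↦ ?_, fun hx ↦ hx.map (Units.coeHom F)⟩
  have hy0 : y ≠ 0 := fun h ↦ x.ne_zero <| by simp [hy, h]
  exact ⟨Units.mk0 y hy0, Units.ext hy⟩

end SquareClasses

section Hensel

open Topology

variable {F : Type*} [NormedField F] [IsUltrametricDist F]

theorem norm_sub_le_max {E : Type*} [SeminormedAddGroup E] [IsUltrametricDist E] (x y : E) :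
    ‖x - y‖ ≤ max ‖x‖ ‖y‖ := by
  simpa [sub_eq_add_neg] using IsUltrametricDist.norm_add_le_max x (-y)

theorem norm_eq_of_norm_sub_lt {E : Type*} [SeminormedAddGroup E] [IsUltrametricDist E] {x y : E}
    (h : ‖x - y‖ < ‖x‖) : ‖y‖ = ‖x‖ := by
  have := IsUltrametricDist.norm_eq_of_add_norm_lt_max (x := x) (y := -y)
    (by simpa [← sub_eq_add_neg] using .inl h)
  rw [this, norm_neg]

theorem norm_one_add_eq_one {x : F} (h : ‖x‖ < 1) : ‖1 + x‖ = 1 := by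
  simpa using norm_eq_of_norm_sub_lt (x := 1) (y := 1 + x) (by simpa using h)

theorem norm_two_le_one : ‖(2 : F)‖ ≤ 1 := by
  simpa using IsUltrametricDist.norm_natCast_le_one F 2

theorem exists_sq_add_self_eq [CompleteSpace F] {c : F} (hc : ‖c‖ < 1) :
    ∃ y : F, ‖y‖ ≤ ‖c‖ ∧ y ^ 2 + y = c := by
  have hmem {y : F} : y ∈ Metric.closedBall (0 : F) ‖c‖ ↔ ‖y‖ ≤ ‖c‖ := mem_closedBall_zero_iff
  have hmaps : Set.MapsTo (fun y : F ↦ c - y ^ 2) (Metric.closedBall 0 ‖c‖)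
      (Metric.closedBall 0 ‖c‖) := by
    intro y hy
    rw [hmem] at hy ⊢
    refine (norm_sub_le_max _ _).trans (max_le le_rfl ?_)
    rw [norm_pow]
    exact (pow_le_of_le_one (norm_nonneg y) (hy.trans hc.le) two_ne_zero).trans hy
  have hcontr : ContractingWith ‖c‖₊ (hmaps.restrict _ _ _) := by
    refine ⟨mod_cast hc, LipschitzWith.of_dist_le_mul fun ⟨x, hx⟩ ⟨y, hy⟩ ↦ ?_⟩
    rw [hmem] at hx hy
    change dist (c - x ^ 2) (c - y ^ 2) ≤ ‖c‖ * dist x y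
    rw [dist_eq_norm, dist_eq_norm, show c - x ^ 2 - (c - y ^ 2) = -((x + y) * (x - y)) by ring,
      norm_neg, norm_mul]
    gcongr
    exact (IsUltrametricDist.norm_add_le_max _ _).trans (max_le hx hy)
  obtain ⟨y, hy, hfix, -⟩ := hcontr.exists_fixedPoint' Metric.isClosed_closedBall.isComplete
    hmaps (x := 0) (by simp) (edist_ne_top _ _)
  have hfix : c - y ^ 2 = y := hfix
  exact ⟨y, hmem.mp hy, by linear_combination -hfix⟩

theorem isSquare_of_norm_sub_sq_lt [CompleteSpace F] {x y : F}
    (hxy : ‖x - y ^ 2‖ < ‖4 * x‖) : IsSquare x := by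
  have h4x : 4 * x ≠ 0 := norm_pos_iff.mp ((norm_nonneg _).trans_lt hxy)
  have h4 : (4 : F) ≠ 0 := left_ne_zero_of_mul h4x
  have hnorm : ‖y ^ 2‖ = ‖x‖ := norm_eq_of_norm_sub_lt <| hxy.trans_le <| by
    rw [norm_mul]
    exact mul_le_of_le_one_left (norm_nonneg x) <| by
      simpa using IsUltrametricDist.norm_natCast_le_one F 4
  have h4y : 4 * y ^ 2 ≠ 0 := mul_ne_zero h4 <| norm_pos_iff.mp <|
    hnorm ▸ norm_pos_iff.mpr (right_ne_zero_of_mul h4x)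
  obtain ⟨z, -, hz⟩ := exists_sq_add_self_eq (c := (x - y ^ 2) / (4 * y ^ 2)) <| by
    rwa [norm_div, div_lt_one (norm_pos_iff.mpr h4y), norm_mul 4, hnorm, ← norm_mul]
  rw [eq_div_iff h4y] at hz
  exact ⟨y * (1 + 2 * z), by linear_combination -hz⟩

theorem eventually_isSquare_mul_of_isUltrametricDist [CompleteSpace F] (h2 : (2 : F) ≠ 0)
    {x : F} (hx : x ≠ 0) : ∀ᶠ y in 𝓝 x, IsSquare (x * y) := by
  have hcont : Continuous fun y : F ↦ ‖x * y - x ^ 2‖ := by fun_prop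
  have hcont4 : Continuous fun y : F ↦ ‖4 * (x * y)‖ := by fun_prop
  have h4 : (4 : F) ≠ 0 := by
    rw [show (4 : F) = 2 * 2 by norm_num]
    exact mul_self_ne_zero.mpr h2
  have hlt : ‖x * x - x ^ 2‖ < ‖4 * (x * x)‖ := by
    rw [← pow_two, sub_self, norm_zero, norm_pos_iff]
    exact mul_ne_zero h4 (pow_ne_zero 2 hx)
  filter_upwards [hcont.continuousAt.eventually_lt hcont4.continuousAt hlt] with y hy
  exact isSquare_of_norm_sub_sq_lt hy

end Hensel

section FractionalIdeals

variable {F : Type*} [NormedField F] [IsUltrametricDist F]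

/-- The fractional ideal `c𝒪 = {x | ‖x‖ ≤ ‖c‖}` of an ultrametric field. -/
def fracIdeal (c : F) : AddSubgroup F where
  carrier := {x | ‖x‖ ≤ ‖c‖}
  zero_mem' := by simp
  add_mem' hx hy := (IsUltrametricDist.norm_add_le_max _ _).trans (max_le hx hy)
  neg_mem' hx := by simpa using hx

theorem mem_fracIdeal {c x : F} : x ∈ fracIdeal c ↔ ‖x‖ ≤ ‖c‖ := Iff.rfl

theorem fracIdeal_le_fracIdeal {c d : F} (h : ‖c‖ ≤ ‖d‖) : fracIdeal c ≤ fracIdeal d :=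
  fun _ hx ↦ le_trans hx h

theorem map_mulLeft_fracIdeal {c : F} (hc : c ≠ 0) (d : F) :
    (fracIdeal d).map (AddMonoidHom.mulLeft c) = fracIdeal (c * d) := by
  ext x
  constructor
  · rintro ⟨y, hy, rfl⟩
    rw [AddMonoidHom.coe_mulLeft, mem_fracIdeal, norm_mul, norm_mul]
    exact mul_le_mul_of_nonneg_left hy (norm_nonneg c)
  · intro hx
    refine ⟨c⁻¹ * x, ?_, by simp [hc]⟩
    rw [mem_fracIdeal, norm_mul] at hx
    rw [SetLike.mem_coe, mem_fracIdeal, norm_mul, norm_inv, inv_mul_le_iff₀ (norm_pos_iff.mpr hc)]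
    exact hx

theorem relIndex_fracIdeal_mul_left {c : F} (hc : c ≠ 0) (d e : F) :
    (fracIdeal (c * d)).relIndex (fracIdeal (c * e)) = (fracIdeal d).relIndex (fracIdeal e) := by
  rw [← map_mulLeft_fracIdeal hc, ← map_mulLeft_fracIdeal hc,
    AddSubgroup.relIndex_map_map_of_injective _ _ (mul_right_injective₀ hc)]

theorem relIndex_fracIdeal_ne_zero [ProperSpace F] {c : F} (hc : c ≠ 0) (d : F) :
    (fracIdeal c).relIndex (fracIdeal d) ≠ 0 := by
  obtain ⟨t, -, hfin, hcover⟩ :=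
    (isCompact_closedBall (0 : F) ‖d‖).finite_cover_balls (norm_pos_iff.mpr hc)
  have hnear (x : fracIdeal d) : ∃ y ∈ t, ‖(x : F) - y‖ < ‖c‖ := by
    simpa [dist_eq_norm] using hcover (mem_closedBall_zero_iff.mpr x.2)
  choose f hft hf using hnear
  have := hfin.to_subtype
  have hinj : Function.Injective fun q : fracIdeal d ⧸ (fracIdeal c).addSubgroupOf (fracIdeal d) ↦
      (⟨f q.out, hft q.out⟩ : t) := by
    intro p q hpq
    rw [← p.out_eq', ← q.out_eq', QuotientAddGroup.eq, AddSubgroup.mem_addSubgroupOf]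
    have hpq' : f p.out = f q.out := congrArg Subtype.val hpq
    have : ((-p.out + q.out : fracIdeal d) : F) = (q.out - f q.out) - (p.out - f p.out) := by
      rw [hpq']; push_cast; ring
    rw [this]
    exact (norm_sub_le_max _ _).trans (max_le (hf _).le (hf _).le)
  have := Finite.of_injective _ hinj
  exact AddSubgroup.index_ne_zero_of_finite

variable (F) in
/-- The index `(𝒪 : 2𝒪)` of an ultrametric field with valuation ring `𝒪`. -/
noncomputable def dyadicIndex : ℕ := (fracIdeal (2 : F)).relIndex (fracIdeal 1)

end FractionalIdeals

section PrincipalUnits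

variable {F : Type*} [NormedField F] [IsUltrametricDist F]

/-- The group of units `u` of the valuation ring with `‖u - 1‖ ≤ ‖c‖`. -/
def principalUnits (c : F) : Subgroup Fˣ where
  carrier := {u | ‖(u : F)‖ = 1 ∧ ‖(u : F) - 1‖ ≤ ‖c‖}
  one_mem' := by simp
  mul_mem' := by
    rintro x y ⟨hx, hx'⟩ ⟨hy, hy'⟩
    refine ⟨by simp [hx, hy], ?_⟩
    rw [Units.val_mul, show (x * y : F) - 1 = x * (y - 1) + (x - 1) by ring]
    exact (IsUltrametricDist.norm_add_le_max _ _).trans (max_le (by simpa [hx] using hy') hx')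
  inv_mem' := by
    rintro x ⟨hx, hx'⟩
    refine ⟨by simp [hx], ?_⟩
    have : ((x⁻¹ : Fˣ) : F) - 1 = (x : F)⁻¹ * (1 - x) := by
      rw [Units.val_inv_eq_inv_val, mul_sub, mul_one, inv_mul_cancel₀ x.ne_zero]
    rwa [this, norm_mul, norm_inv, hx, inv_one, one_mul, norm_sub_rev]

theorem mem_principalUnits_of_lt {c : F} (hc : ‖c‖ < 1) {u : Fˣ} :
    u ∈ principalUnits c ↔ ‖(u : F) - 1‖ ≤ ‖c‖ := by
  refine ⟨And.right, fun h ↦ ⟨?_, h⟩⟩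
  simpa using norm_one_add_eq_one (h.trans_lt hc)

theorem exists_mem_principalUnits_eq {c x : F} (hc : ‖c‖ < 1) (hx : ‖x‖ ≤ ‖c‖) :
    ∃ u ∈ principalUnits c, (u : F) = 1 + x := by
  have h : ‖1 + x‖ = 1 := norm_one_add_eq_one (hx.trans_lt hc)
  have h0 : 1 + x ≠ 0 := norm_pos_iff.mp (h ▸ one_pos)
  exact ⟨Units.mk0 _ h0, ⟨h, by simpa using hx⟩, rfl⟩

theorem relIndex_principalUnits {c d : F} (hc : ‖c‖ < 1) (hcd : ‖c‖ ^ 2 ≤ ‖d‖)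
    (hdc : ‖d‖ ≤ ‖c‖) :
    (principalUnits d).relIndex (principalUnits c) = (fracIdeal d).relIndex (fracIdeal c) := by
  let D := (fracIdeal d).addSubgroupOf (fracIdeal c)
  let f : principalUnits c →* Multiplicative (fracIdeal c ⧸ D) := MonoidHom.mk'
    (fun u ↦ .ofAdd (QuotientAddGroup.mk ⟨((u : Fˣ) : F) - 1, u.2.2⟩)) fun u v ↦ by
      rw [← ofAdd_add, ← QuotientAddGroup.mk_add, EmbeddingLike.apply_eq_iff_eq, Eq.comm,
        QuotientAddGroup.eq, AddSubgroup.mem_addSubgroupOf, mem_fracIdeal]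
      push_cast
      rw [show -(((u : Fˣ) : F) - 1 + ((v : Fˣ) - 1)) + ((u : Fˣ) * (v : Fˣ) - 1) =
        ((u : Fˣ) - 1) * ((v : Fˣ) - 1) by ring, norm_mul]
      exact (mul_le_mul u.2.2 v.2.2 (norm_nonneg _) (norm_nonneg _)).trans (sq ‖c‖ ▸ hcd)
  have hf : Function.Surjective f := by
    intro q
    obtain ⟨x, hx⟩ := QuotientAddGroup.mk_surjective q.toAdd
    obtain ⟨u, hu, hux⟩ := exists_mem_principalUnits_eq hc x.2
    exact ⟨⟨u, hu⟩, Multiplicative.toAdd.injective <| by simp [f, hux, hx]⟩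
  have hker : f.ker = (principalUnits d).subgroupOf (principalUnits c) := by
    ext u
    rw [MonoidHom.mem_ker, Subgroup.mem_subgroupOf,
      mem_principalUnits_of_lt (hdc.trans_lt hc), ← toAdd_eq_zero]
    exact (QuotientAddGroup.eq_zero_iff _).trans AddSubgroup.mem_addSubgroupOf
  rw [Subgroup.relIndex, ← hker, Subgroup.index_ker, MonoidHom.range_eq_top.mpr hf,
    Subgroup.card_top]
  rfl

theorem map_sq_principalUnits [CompleteSpace F] (h2 : (2 : F) ≠ 0) {c : F} (hc : ‖c‖ < 1) :
    (principalUnits (2 * c)).map (powMonoidHom 2) = principalUnits (4 * c) := by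
  have h4 : (4 : F) = 2 * 2 := by norm_num
  have h4' : (4 : F) ≠ 0 := h4 ▸ mul_ne_zero h2 h2
  have h2c : ‖2 * c‖ < 1 := by
    rw [norm_mul]; exact (mul_le_of_le_one_left (norm_nonneg c) norm_two_le_one).trans_lt hc
  ext u
  constructor
  · rintro ⟨v, ⟨hv, hv'⟩, rfl⟩
    refine ⟨by simp [hv], ?_⟩
    have hv2 : ‖(v : F) + 1‖ ≤ ‖(2 : F)‖ := by
      rw [show (v : F) + 1 = (v - 1) + 2 by ring]
      refine (IsUltrametricDist.norm_add_le_max _ _).trans (max_le (hv'.trans ?_) le_rfl)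
      rw [norm_mul]
      exact mul_le_of_le_one_right (norm_nonneg _) hc.le
    rw [powMonoidHom_apply, Units.val_pow_eq_pow_val, show (v : F) ^ 2 - 1 = (v + 1) * (v - 1) by
      ring, h4, mul_assoc, norm_mul, norm_mul 2 (2 * c)]
    exact mul_le_mul hv2 hv' (norm_nonneg _) (norm_nonneg _)
  · rintro ⟨-, hu⟩
    have hle : ‖((u : F) - 1) / 4‖ ≤ ‖c‖ := by
      rw [norm_div, div_le_iff₀ (norm_pos_iff.mpr h4'), mul_comm, ← norm_mul]
      exact hu
    obtain ⟨y, hy, hy'⟩ := exists_sq_add_self_eq (hle.trans_lt hc)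
    obtain ⟨v, hv, hvy⟩ := exists_mem_principalUnits_eq (x := 2 * y) h2c <| by
      rw [norm_mul, norm_mul]
      exact mul_le_mul_of_nonneg_left (hy.trans hle) (norm_nonneg _)
    refine ⟨v, hv, Units.ext ?_⟩
    rw [eq_div_iff h4'] at hy'
    rw [powMonoidHom_apply, Units.val_pow_eq_pow_val, hvy]
    linear_combination hy'

theorem index_square_principalUnits [CompleteSpace F] (h2 : (2 : F) ≠ 0) {c : F} (hc0 : c ≠ 0)
    (hc : ‖c‖ < 1) : (Subgroup.square (principalUnits (2 * c))).index = dyadicIndex F := by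
  have h2le := norm_two_le_one (F := F)
  have hc2 : ‖2 * c‖ < 1 := by
    rw [norm_mul]; exact (mul_le_of_le_one_left (norm_nonneg c) h2le).trans_lt hc
  have h4c : 4 * c = 2 * c * 2 := by ring
  rw [← relIndex_map_sq, map_sq_principalUnits h2 hc, relIndex_principalUnits hc2, h4c]
  · conv_lhs => rw [← mul_one (2 * c), mul_assoc (2 * c), one_mul]
    exact relIndex_fracIdeal_mul_left (mul_ne_zero h2 hc0) 2 1
  · rw [h4c, sq, norm_mul _ (2 : F)]
    refine mul_le_mul_of_nonneg_left ?_ (norm_nonneg _)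
    rw [norm_mul]
    exact mul_le_of_le_one_right (norm_nonneg _) hc.le
  · rw [h4c, norm_mul _ (2 : F)]
    exact mul_le_of_le_one_right (norm_nonneg _) h2le

end PrincipalUnits

section LocalSquareClasses

variable {F : Type*} [NormedField F] [IsUltrametricDist F]

/-- For `‖ϖ‖ < 1`, the group `⟨ϖ⟩ × (1 + c𝒪)`, a subgroup of finite index in `Fˣ` when `F` is
locally compact. -/
def uniformizedUnits (ϖ : Fˣ) (c : F) : Subgroup Fˣ := Subgroup.zpowers ϖ ⊔ principalUnits c

theorem mem_uniformizedUnits {ϖ : Fˣ} {c : F} {x : Fˣ} :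
    x ∈ uniformizedUnits ϖ c ↔ ∃ k : ℤ, ∃ u ∈ principalUnits c, ϖ ^ k * u = x := by
  simp [uniformizedUnits, Subgroup.mem_sup, Subgroup.mem_zpowers_iff]

theorem mem_principalUnits_of_norm_eq_one {ϖ : Fˣ} (hϖ : ‖(ϖ : F)‖ < 1) {c : F} {x : Fˣ}
    (hx : x ∈ uniformizedUnits ϖ c) (hx1 : ‖(x : F)‖ = 1) : x ∈ principalUnits c := by
  obtain ⟨k, u, hu, rfl⟩ := mem_uniformizedUnits.mp hx
  have hk : ‖(ϖ : F)‖ ^ k = 1 := by simpa [hu.1] using hx1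
  obtain rfl : k = 0 := (zpow_eq_one_iff_right₀ (norm_nonneg _) hϖ.ne).mp hk
  simpa using hu

theorem index_square_uniformizedUnits {ϖ : Fˣ} (hϖ : ‖(ϖ : F)‖ < 1) (c : F) :
    (Subgroup.square (uniformizedUnits ϖ c)).index =
      2 * (Subgroup.square (principalUnits c)).index := by
  let ν : Fˣ →* ℝˣ := Units.map (normHom : F →*₀ ℝ)
  let f := ν.comp (uniformizedUnits ϖ c).subtype
  have hle : principalUnits c ≤ uniformizedUnits ϖ c := le_sup_right
  have hrange : f.range = Subgroup.zpowers (ν ϖ) := by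
    have hU : (principalUnits c).map ν = ⊥ := by
      rw [Subgroup.map_eq_bot_iff]
      exact fun u hu ↦ Units.ext hu.1
    rw [MonoidHom.range_comp, Subgroup.range_subtype, uniformizedUnits, Subgroup.map_sup, hU,
      sup_bot_eq, MonoidHom.map_zpowers]
  have hker : f.ker = (principalUnits c).subgroupOf (uniformizedUnits ϖ c) := by
    ext x
    exact ⟨fun hx ↦ mem_principalUnits_of_norm_eq_one hϖ x.2 (Units.ext_iff.mp hx),
      fun hx ↦ Units.ext hx.1⟩
  have : IsCyclic f.range := hrange ▸ inferInstance
  have : Infinite f.range := by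
    rw [hrange]
    refine (infinite_zpowers.mpr fun h ↦ ?_).to_subtype
    obtain ⟨n, hn, h⟩ := isOfFinOrder_iff_pow_eq_one.mp h
    exact hϖ.ne <| (pow_eq_one_iff_of_nonneg (norm_nonneg _) hn.ne').mp (Units.ext_iff.mp h)
  rw [index_square_eq_two_mul_ker f, hker, index_square_congr (Subgroup.subgroupOfEquivOfLe hle)]

theorem exists_norm_zpow_mul_mem_Ioc {F : Type*} [NormedField F] {ϖ : Fˣ} (hϖ : ‖(ϖ : F)‖ < 1)
    (x : Fˣ) :
    ∃ k : ℤ, ‖((ϖ ^ k * x : Fˣ) : F)‖ ∈ Set.Ioc ‖(ϖ : F)‖ 1 := by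
  have hpos : 0 < ‖(ϖ : F)‖ := norm_pos_iff.mpr ϖ.ne_zero
  obtain ⟨k, hk, hk'⟩ := exists_mem_Ioc_zpow (norm_pos_iff.mpr x.ne_zero)
    ((one_lt_inv₀ hpos).mpr hϖ)
  rw [inv_zpow', zpow_neg] at hk hk'
  refine ⟨k + 1, ?_⟩
  rw [Units.val_mul, Units.val_zpow_eq_zpow_val, norm_mul, norm_zpow]
  constructor
  · rw [inv_lt_iff_one_lt_mul₀ (by positivity), mul_comm] at hk
    rw [zpow_add_one₀ hpos.ne', mul_assoc, mul_left_comm]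
    exact lt_mul_of_one_lt_right hpos hk
  · exact (le_inv_mul_iff₀ (by positivity)).mp (by simpa using hk')

theorem index_uniformizedUnits_ne_zero [ProperSpace F] {ϖ : Fˣ} (hϖ : ‖(ϖ : F)‖ < 1) {c : F}
    (hc0 : c ≠ 0) (hc : ‖c‖ < 1) : (uniformizedUnits ϖ c).index ≠ 0 := by
  let D := (fracIdeal (ϖ * c)).addSubgroupOf (fracIdeal 1)
  have : D.FiniteIndex := ⟨relIndex_fracIdeal_ne_zero (mul_ne_zero ϖ.ne_zero hc0) 1⟩
  choose k hk using exists_norm_zpow_mul_mem_Ioc hϖ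
  let rep (x : Fˣ) : fracIdeal (1 : F) ⧸ D :=
    QuotientAddGroup.mk ⟨(ϖ ^ k x * x : Fˣ), by simpa [mem_fracIdeal] using (hk x).2⟩
  have hrep (x y : Fˣ) (h : rep x = rep y) : x⁻¹ * y ∈ uniformizedUnits ϖ c := by
    set x' := ϖ ^ k x * x with hx'
    set y' := ϖ ^ k y * y with hy'
    have hsub : ‖(y' : F) - x'‖ ≤ ‖(ϖ * c : F)‖ := by
      have := QuotientAddGroup.eq.mp h
      rwa [AddSubgroup.mem_addSubgroupOf, AddSubgroup.coe_add, AddSubgroup.coe_neg,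
        neg_add_eq_sub] at this
    have hu : x'⁻¹ * y' ∈ principalUnits c := by
      rw [mem_principalUnits_of_lt hc]
      have : ((x'⁻¹ * y' : Fˣ) : F) - 1 = (y' - x') / x' := by
        rw [sub_div, div_self x'.ne_zero]; simp [div_eq_inv_mul]
      rw [this, norm_div, div_le_iff₀ (norm_pos_iff.mpr x'.ne_zero), mul_comm]
      refine hsub.trans (norm_mul (ϖ : F) c ▸ ?_)
      exact mul_le_mul_of_nonneg_right (hk x).1.le (norm_nonneg c)
    refine mem_uniformizedUnits.mpr ⟨k x - k y, _, hu, ?_⟩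
    rw [hx', hy', zpow_sub, ← div_eq_mul_inv, inv_mul_eq_div, inv_mul_eq_div, div_mul_div_comm,
      mul_left_comm _ _ x, mul_div_mul_left_eq_div, mul_div_mul_left_eq_div]
  have : Finite (Fˣ ⧸ uniformizedUnits ϖ c) :=
    Finite.of_injective (fun q ↦ rep q.out) fun p q h ↦ by
      rw [← p.out_eq', ← q.out_eq', QuotientGroup.eq]
      exact hrep _ _ h
  exact Subgroup.index_ne_zero_of_finite

theorem index_square_units (F : Type*) [NontriviallyNormedField F] [IsUltrametricDist F]
    [ProperSpace F] (h2 : (2 : F) ≠ 0) :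
    (Subgroup.square Fˣ).index = 4 * dyadicIndex F := by
  obtain ⟨c, hc0, hc⟩ := NormedField.exists_norm_lt_one F
  have hc0 : c ≠ 0 := norm_pos_iff.mp hc0
  let ϖ := Units.mk0 c hc0
  have h2c : ‖2 * c‖ < 1 := by
    rw [norm_mul]; exact (mul_le_of_le_one_left (norm_nonneg c) norm_two_le_one).trans_lt hc
  have hϖ : ‖(ϖ : F)‖ < 1 := hc
  rw [index_square_eq_relIndex_ker_mul
    (index_uniformizedUnits_ne_zero hϖ (mul_ne_zero h2 hc0) h2c),
    index_square_uniformizedUnits hϖ, index_square_principalUnits h2 hc0 hc]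
  suffices h : (uniformizedUnits ϖ (2 * c)).relIndex (powMonoidHom 2 : Fˣ →* Fˣ).ker = 2 by
    rw [h]; ring
  have hneg : (-1 : Fˣ) ∉ uniformizedUnits ϖ (2 * c) := fun h ↦ by
    have := (mem_principalUnits_of_norm_eq_one hϖ h (by simp)).2
    rw [Units.val_neg, Units.val_one, show (-1 - 1 : F) = -2 by norm_num, norm_neg,
      norm_mul] at this
    have := norm_pos_iff.mpr h2
    nlinarith
  refine Subgroup.relIndex_eq_two_iff_exists_notMem_and.mpr ⟨-1, by simp [MonoidHom.mem_ker], hneg,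
    fun x hx ↦ ?_⟩
  obtain hx | hx := sq_eq_one_iff.mp (Units.ext_iff.mp (MonoidHom.mem_ker.mp hx))
  · obtain rfl : x = 1 := Units.ext hx
    exact .inr (one_mem _)
  · obtain rfl : x = -1 := Units.ext hx
    exact .inl (by simp [one_mem])

end LocalSquareClasses

section FiniteExtensions

theorem relIndex_map_eq_of_relIndex_ne_zero {A : Type*} [AddGroup A] {f : A →+ A}
    (hf : Function.Injective f) {W M : AddSubgroup A} (hWM : W ≤ M) (hW : W.relIndex M ≠ 0)
    (hfW : W.map f ≤ W) (hfM : M.map f ≤ M) :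
    (M.map f).relIndex M = (W.map f).relIndex W := by
  refine Nat.eq_of_mul_eq_mul_left (Nat.pos_of_ne_zero hW) ?_
  calc W.relIndex M * (M.map f).relIndex M
      = (W.map f).relIndex (M.map f) * (M.map f).relIndex M := by
        rw [AddSubgroup.relIndex_map_map_of_injective _ _ hf]
    _ = (W.map f).relIndex W * W.relIndex M := by
        rw [AddSubgroup.relIndex_mul_relIndex _ _ _ (AddSubgroup.map_mono hWM) hfM,
          AddSubgroup.relIndex_mul_relIndex _ _ _ hfW hWM]
    _ = W.relIndex M * (W.map f).relIndex W := mul_comm _ _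

variable {F L ι : Type*} [NontriviallyNormedField F] [IsUltrametricDist F]
  [NontriviallyNormedField L] [NormedSpace F L]

/-- The lattice of elements of `L` with integral coordinates, the coordinates being given by a
linear equivalence `e` of `L` with `F ^ ι`. -/
def unitLattice (e : L ≃L[F] (ι → F)) : AddSubgroup L :=
  (AddSubgroup.pi Set.univ fun _ ↦ fracIdeal (1 : F)).comap (e : L →+ (ι → F))

theorem mem_unitLattice {e : L ≃L[F] (ι → F)} {x : L} :
    x ∈ unitLattice e ↔ ∀ i, ‖e x i‖ ≤ 1 := by
  simp [unitLattice, AddSubgroup.mem_pi, mem_fracIdeal]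

theorem exists_fracIdeal_le_unitLattice [Finite ι] [IsUltrametricDist L] (e : L ≃L[F] (ι → F)) :
    ∃ d : L, d ≠ 0 ∧ fracIdeal d ≤ unitLattice e := by
  have := Fintype.ofFinite ι
  obtain ⟨ε, hε, h⟩ := Metric.mem_nhds_iff.mp <| e.continuous.continuousAt.preimage_mem_nhds
    (by simpa using Metric.closedBall_mem_nhds (0 : ι → F) one_pos : _ ∈ nhds (e 0))
  obtain ⟨d, hd0, hd⟩ := NormedField.exists_norm_lt L hε
  refine ⟨d, norm_pos_iff.mp hd0, fun x hx ↦ mem_unitLattice.mpr fun i ↦ ?_⟩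
  have hx' := h (mem_ball_zero_iff.mpr (lt_of_le_of_lt hx hd))
  exact (norm_le_pi_norm (e x) i).trans (mem_closedBall_zero_iff.mp hx')

theorem exists_unitLattice_le_fracIdeal [Finite ι] [IsUltrametricDist L] (e : L ≃L[F] (ι → F)) :
    ∃ d : L, d ≠ 0 ∧ unitLattice e ≤ fracIdeal d := by
  have := Fintype.ofFinite ι
  obtain ⟨d, hd⟩ := NormedField.exists_lt_norm L ‖(e.symm : (ι → F) →L[F] L)‖
  refine ⟨d, norm_pos_iff.mp ((norm_nonneg _).trans_lt hd), fun x hx ↦ ?_⟩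
  have hx' : ‖e x‖ ≤ 1 := (pi_norm_le_iff_of_nonneg zero_le_one).mpr (mem_unitLattice.mp hx)
  have := (e.symm : (ι → F) →L[F] L).le_opNorm_of_le hx'
  exact (by simpa using this : ‖x‖ ≤ _).trans hd.le

theorem map_mulLeft_two_unitLattice_le (e : L ≃L[F] (ι → F)) :
    (unitLattice e).map (AddMonoidHom.mulLeft 2) ≤ unitLattice e := by
  rintro _ ⟨x, hx, rfl⟩
  simpa [two_mul] using add_mem hx hx

theorem relIndex_map_mulLeft_two_unitLattice [Fintype ι] (h2 : (2 : F) ≠ 0)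
    (e : L ≃L[F] (ι → F)) :
    ((unitLattice e).map (AddMonoidHom.mulLeft 2)).relIndex (unitLattice e) =
      dyadicIndex F ^ Fintype.card ι := by
  let f : (ι → fracIdeal (1 : F)) →+ L :=
    (e.symm : (ι → F) →+ L).comp ((fracIdeal (1 : F)).subtype.compLeft ι)
  have hrange : f.range = unitLattice e := by
    ext x
    refine ⟨?_, fun hx ↦ ?_⟩
    · rintro ⟨y, rfl⟩
      exact mem_unitLattice.mpr fun i ↦ by simpa [f] using mem_fracIdeal.mp (y i).2
    · refine ⟨fun i ↦ ⟨e x i, ?_⟩, e.symm_apply_apply x⟩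
      simpa [mem_fracIdeal] using mem_unitLattice.mp hx i
  have hcomap : ((unitLattice e).map (AddMonoidHom.mulLeft 2)).comap f =
      AddSubgroup.pi Set.univ fun _ ↦ (fracIdeal (2 : F)).addSubgroupOf (fracIdeal 1) := by
    ext y
    simp only [AddSubgroup.mem_pi, AddSubgroup.mem_addSubgroupOf, mem_fracIdeal, Set.mem_univ,
      true_imp_iff]
    constructor
    · rintro ⟨x, hx, hxy⟩ i
      have hi : (y i : F) = 2 * e x i := by
        rw [two_mul, ← Pi.add_apply, ← map_add, ← two_mul]
        exact congrFun ((e.symm_apply_eq.mp hxy.symm)) i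
      rw [hi, norm_mul]
      exact mul_le_of_le_one_right (norm_nonneg _) (mem_unitLattice.mp hx i)
    · refine fun h ↦ ⟨e.symm fun i ↦ 2⁻¹ * (y i : F), mem_unitLattice.mpr fun i ↦ ?_, ?_⟩
      · rw [e.apply_symm_apply, norm_mul, norm_inv]
        exact inv_mul_le_one_of_le₀ (h i) (norm_nonneg _)
      · rw [AddMonoidHom.coe_mulLeft, two_mul, ← map_add]
        refine congrArg e.symm (funext fun i ↦ ?_)
        simpa [← two_mul] using mul_inv_cancel_left₀ h2 (y i : F)
  rw [← hrange, ← AddSubgroup.index_comap, hrange, hcomap, AddSubgroup.index_pi]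
  simp [dyadicIndex, AddSubgroup.relIndex]

theorem dyadicIndex_eq_pow_finrank [ProperSpace F] (h2 : (2 : F) ≠ 0) [IsUltrametricDist L]
    [FiniteDimensional F L] : dyadicIndex L = dyadicIndex F ^ Module.finrank F L := by
  let e := (Module.finBasis F L).equivFun.toContinuousLinearEquiv
  have := FiniteDimensional.proper F L
  have h2L : (2 : L) ≠ 0 := by
    simpa [two_smul, one_add_one_eq_two] using smul_ne_zero h2 (one_ne_zero (α := L))
  obtain ⟨d, hd0, hd⟩ := exists_fracIdeal_le_unitLattice e
  obtain ⟨c, hc0, hc⟩ := exists_unitLattice_le_fracIdeal e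
  have hrel : (unitLattice e).relIndex (fracIdeal c) ≠ 0 := fun h ↦
    relIndex_fracIdeal_ne_zero hd0 c <| Nat.eq_zero_of_zero_dvd <|
      h ▸ AddSubgroup.relIndex_dvd_of_le_left _ hd
  have hmul : (fracIdeal c).map (AddMonoidHom.mulLeft 2) = fracIdeal (c * 2) := by
    rw [map_mulLeft_fracIdeal h2L, mul_comm]
  have hle : fracIdeal (c * 2) ≤ fracIdeal c := fracIdeal_le_fracIdeal <| by
    rw [norm_mul]
    exact mul_le_of_le_one_right (norm_nonneg c) norm_two_le_one
  rw [← Fintype.card_fin (Module.finrank F L), ← relIndex_map_mulLeft_two_unitLattice h2 e,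
    ← relIndex_map_eq_of_relIndex_ne_zero (mul_right_injective₀ h2L) hc hrel
      (map_mulLeft_two_unitLattice_le e) (hmul.trans_le hle), hmul]
  conv_rhs => rw [← mul_one c, mul_assoc, one_mul, relIndex_fracIdeal_mul_left hc0]
  rfl

end FiniteExtensions

section QuadraticExtensions

variable {F : Type*} [Field F] {a : F}

/-- The quadratic extension `F(√a)`; it is a field as soon as `a` is not a square. -/
abbrev SqrtExt (a : F) : Type _ := QuadraticAlgebra F a 0

instance [h : Fact (¬IsSquare a)] : Fact (∀ r : F, r ^ 2 ≠ a + 0 * r) :=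
  ⟨fun r hr ↦ h.out ⟨r, by rw [← sq, hr, zero_mul, add_zero]⟩⟩

/-- The norm `F(√a)ˣ → Fˣ`, `x + y√a ↦ x² - ay²`. -/
def unitsNorm (a : F) : (SqrtExt a)ˣ →* Fˣ := Units.map QuadraticAlgebra.norm

/-- The inclusion `Fˣ → F(√a)ˣ`. -/
def unitsIncl (a : F) : Fˣ →* (SqrtExt a)ˣ := Units.map (algebraMap F (SqrtExt a))

theorem norm_sqrtExt (z : SqrtExt a) : z.norm = z.re ^ 2 - a * z.im ^ 2 := by
  rw [QuadraticAlgebra.norm_def]; ring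

theorem starRingEnd_comp_algebraMap_sqrtExt :
    (starRingEnd (SqrtExt a)).comp (algebraMap F _) = algebraMap F _ :=
  RingHom.ext fun x ↦ by ext <;> simp [starRingEnd_apply]

theorem unitsNorm_unitsIncl (b : Fˣ) : unitsNorm a (unitsIncl a b) = b ^ 2 :=
  Units.ext (QuadraticAlgebra.norm_algebraMap _)

theorem mem_range_unitsNorm {b : Fˣ} :
    b ∈ (unitsNorm a).range ↔ ∃ x y : F, x ^ 2 - a * y ^ 2 = b := by
  constructor
  · rintro ⟨z, rfl⟩
    exact ⟨_, _, (norm_sqrtExt (z : SqrtExt a)).symm⟩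
  · rintro ⟨x, y, hxy⟩
    have hnorm : (⟨x, y⟩ : SqrtExt a).norm = b := by rw [norm_sqrtExt, hxy]
    have hz : IsUnit (⟨x, y⟩ : SqrtExt a) := by
      rw [QuadraticAlgebra.isUnit_iff_norm_isUnit, hnorm]
      exact b.isUnit
    exact ⟨hz.unit, Units.ext hnorm⟩

theorem square_le_range_unitsNorm : Subgroup.square Fˣ ≤ (unitsNorm a).range := by
  rintro _ ⟨b, rfl⟩
  exact ⟨unitsIncl a b, by rw [unitsNorm_unitsIncl, sq]⟩

theorem exists_sq_sub_mul_sq_eq_of_isSquare (h2 : (2 : F) ≠ 0) (ha : a ≠ 0) (hsq : IsSquare a)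
    (b : F) : ∃ x y, x ^ 2 - a * y ^ 2 = b := by
  obtain ⟨r, rfl⟩ := hsq
  have hr : r ≠ 0 := left_ne_zero_of_mul ha
  refine ⟨(b + 1) / 2, (b - 1) / (2 * r), ?_⟩
  field_simp
  ring

theorem range_unitsNorm_eq_top (h2 : (2 : F) ≠ 0) (ha : a ≠ 0) (hsq : IsSquare a) :
    (unitsNorm a).range = ⊤ :=
  eq_top_iff.mpr fun b _ ↦
    mem_range_unitsNorm.mpr (exists_sq_sub_mul_sq_eq_of_isSquare h2 ha hsq b)

theorem isSquare_algebraMap_sqrtExt_iff (h2 : (2 : F) ≠ 0) (ha : a ≠ 0) {b : F} :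
    IsSquare (algebraMap F (SqrtExt a) b) ↔ IsSquare b ∨ IsSquare (a * b) := by
  constructor
  · rintro ⟨⟨x, y⟩, h⟩
    have hre : b = x * x + a * y * y := by simpa using congrArg (·.re) h
    have him : 2 * (x * y) = 0 := by
      have : 0 = x * y + y * x := by simpa using congrArg (·.im) h
      linear_combination -this
    obtain rfl | rfl := mul_eq_zero.mp ((mul_eq_zero.mp him).resolve_left h2)
    · exact .inr ⟨a * y, by rw [hre]; ring⟩
    · exact .inl ⟨x, by rw [hre]; ring⟩
  · rintro (h | ⟨y, hy⟩)
    · exact h.map _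
    · refine ⟨⟨0, y / a⟩, ?_⟩
      ext
      · simp only [QuadraticAlgebra.algebraMap_re, QuadraticAlgebra.re_mul]
        field_simp
        linear_combination hy
      · simp

theorem ne_zero_of_not_isSquare (ha : ¬IsSquare a) : a ≠ 0 := by
  rintro rfl
  exact ha IsSquare.zero

section Field

variable [Fact (¬IsSquare a)]

theorem exists_mul_star_eq_of_unitsNorm_eq_one {x : (SqrtExt a)ˣ} (hx : unitsNorm a x = 1) :
    ∃ y : (SqrtExt a)ˣ, (x : SqrtExt a) * star (y : SqrtExt a) = y := by
  have hxx : (x : SqrtExt a) * star (x : SqrtExt a) = 1 := by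
    rw [← QuadraticAlgebra.algebraMap_norm_eq_mul_star,
      show (x : SqrtExt a).norm = 1 from Units.ext_iff.mp hx, map_one]
  by_cases h : 1 + (x : SqrtExt a) = 0
  · refine ⟨Units.mk0 (⟨0, 1⟩ : SqrtExt a) fun h ↦ by simpa using congrArg (·.im) h, ?_⟩
    rw [eq_neg_of_add_eq_zero_right h]
    ext <;> simp
  · refine ⟨Units.mk0 _ h, ?_⟩
    rw [Units.val_mk0, star_add, star_one, mul_add, mul_one, hxx, add_comm]

theorem eq_sq_mul_unitsIncl_of_mul_star_eq {x y : (SqrtExt a)ˣ}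
    (h : (x : SqrtExt a) * star (y : SqrtExt a) = y) :
    x = y ^ 2 * unitsIncl a (unitsNorm a y)⁻¹ := by
  rw [map_inv, eq_mul_inv_iff_mul_eq]
  refine Units.ext ?_
  change (x : SqrtExt a) * algebraMap F _ (y : SqrtExt a).norm = y ^ 2
  rw [QuadraticAlgebra.algebraMap_norm_eq_mul_star]
  linear_combination (y : SqrtExt a) * h

theorem relIndex_square_comap_unitsIncl (h2 : (2 : F) ≠ 0) :
    (Subgroup.square Fˣ).relIndex ((Subgroup.square (SqrtExt a)ˣ).comap (unitsIncl a)) = 2 := by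
  have ha : a ≠ 0 := ne_zero_of_not_isSquare Fact.out
  let u : Fˣ := Units.mk0 a ha
  have hmem (b : Fˣ) : b ∈ (Subgroup.square (SqrtExt a)ˣ).comap (unitsIncl a) ↔
      b ∈ Subgroup.square Fˣ ∨ u * b ∈ Subgroup.square Fˣ := by
    simp only [Subgroup.mem_comap, Subgroup.mem_square, ← isSquare_units_iff]
    exact isSquare_algebraMap_sqrtExt_iff h2 ha
  have hu : u ∉ Subgroup.square Fˣ := fun h ↦ Fact.out (p := ¬IsSquare a) (isSquare_units_iff.mpr h)
  refine Subgroup.relIndex_eq_two_iff_exists_notMem_and.mpr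
    ⟨u, (hmem u).mpr (.inr (IsSquare.mul_self u)), hu, fun b hb ↦ ?_⟩
  rw [mul_comm]
  exact ((hmem b).mp hb).symm

theorem index_range_unitsNorm_mul (h2 : (2 : F) ≠ 0) :
    (unitsNorm a).range.index * (Subgroup.square (SqrtExt a)ˣ).index * 2 =
      (Subgroup.square Fˣ).index ^ 2 := by
  rw [← index_range_mul_index_square_mul_relIndex _ (unitsNorm a) unitsNorm_unitsIncl fun x hx ↦
    (exists_mul_star_eq_of_unitsNorm_eq_one hx).imp fun _ hy ↦
      ⟨_, eq_sq_mul_unitsIncl_of_mul_star_eq hy⟩, relIndex_square_comap_unitsIncl h2]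

end Field

end QuadraticExtensions

theorem index_range_unitsNorm_eq_two {F : Type*} [NontriviallyNormedField F] [IsUltrametricDist F]
    [ProperSpace F] (h2 : (2 : F) ≠ 0) {a : F} [Fact (¬IsSquare a)] :
    (unitsNorm a).range.index = 2 := by
  let : NontriviallyNormedField (SqrtExt a) := spectralNorm.nontriviallyNormedField F (SqrtExt a)
  let : NormedAlgebra F (SqrtExt a) := spectralNorm.normedAlgebra F (SqrtExt a)
  have := IsUltrametricDist.of_normedAlgebra F (L := SqrtExt a)
  have := FiniteDimensional.proper F (SqrtExt a)
  have h2L : (2 : SqrtExt a) ≠ 0 := by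
    simpa only [map_ofNat] using (map_ne_zero (algebraMap F (SqrtExt a))).mpr h2
  have hL : dyadicIndex (SqrtExt a) = dyadicIndex F ^ 2 := by
    rw [dyadicIndex_eq_pow_finrank (F := F) h2, QuadraticAlgebra.finrank_eq_two]
  have hpos : dyadicIndex F ≠ 0 := relIndex_fracIdeal_ne_zero h2 1
  have h := index_range_unitsNorm_mul (a := a) h2
  rw [index_square_units F h2, index_square_units (SqrtExt a) h2L, hL] at h
  refine Nat.eq_of_mul_eq_mul_right (Nat.pos_of_ne_zero (pow_ne_zero 2 hpos)) ?_
  linarith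

section Completions

open Valued

variable {K : Type*} [Field K] [NumberField K] (v : HeightOneSpectrum (𝓞 K))

noncomputable instance : NontriviallyNormedField (v.adicCompletion K) :=
  Valued.toNontriviallyNormedField (v.adicCompletion K) (WithZero (Multiplicative ℤ))

instance : CharZero (v.adicCompletion K) :=
  charZero_of_injective_algebraMap (algebraMap K _).injective

variable {v}

theorem valued_algebraMap_adicCompletion (x : K) :
    Valued.v (algebraMap K (v.adicCompletion K) x) = v.valuation K x :=
  v.valuedAdicCompletion_eq_valuation' x

theorem norm_algebraMap_adicCompletion_le_iff {x y : K} :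
    ‖algebraMap K (v.adicCompletion K) x‖ ≤ ‖algebraMap K (v.adicCompletion K) y‖ ↔
      v.valuation K x ≤ v.valuation K y := by
  rw [Valued.toNormedField.norm_le_iff, valued_algebraMap_adicCompletion,
    valued_algebraMap_adicCompletion]

theorem exists_norm_sub_algebraMap_le {z : v.adicCompletion K} (hz : ‖z‖ ≤ 1)
    {d : v.adicCompletion K} (hd : d ≠ 0) :
    ∃ x : 𝓞 K, ‖z - algebraMap K (v.adicCompletion K) x‖ ≤ ‖d‖ := by
  obtain ⟨y, hy⟩ := (HeightOneSpectrum.denseRange_algebraMap (R := 𝓞 K) (K := K) v).exists_dist_lt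
    z (ε := min ‖d‖ 1) (lt_min (norm_pos_iff.mpr hd) one_pos)
  rw [dist_eq_norm, lt_min_iff] at hy
  have hy1 : v.valuation K y ≤ 1 := by
    rw [← valued_algebraMap_adicCompletion, ← Valued.toNormedField.norm_le_one_iff]
    calc ‖algebraMap K (v.adicCompletion K) y‖
        = ‖z - (z - algebraMap K (v.adicCompletion K) y)‖ := by rw [sub_sub_cancel]
      _ ≤ 1 := (norm_sub_le_max _ _).trans (max_le hz hy.2.le)
  obtain ⟨x, hx⟩ := v.exists_valuation_sub_lt_of_integer hy1
    (Units.mk0 (Valued.v d) ((Valuation.ne_zero_iff _).mpr hd))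
  refine ⟨x, ?_⟩
  rw [← sub_sub_sub_cancel_right _ _ (algebraMap K (v.adicCompletion K) y)]
  refine (norm_sub_le_max _ _).trans (max_le hy.1.le ?_)
  rw [← map_sub, Valued.toNormedField.norm_le_iff, valued_algebraMap_adicCompletion]
  exact hx.le

variable (v)

theorem residue_eq_zero_iff_norm_lt_one (z : 𝒪[v.adicCompletion K]) :
    IsLocalRing.residue _ z = 0 ↔ ‖(z : v.adicCompletion K)‖ < 1 := by
  rw [IsLocalRing.residue_eq_zero_iff, IsLocalRing.mem_maximalIdeal, mem_nonunits_iff,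
    Valuation.Integer.not_isUnit_iff_valuation_lt_one,
    Valued.toNormedField.norm_lt_one_iff]

instance : Finite 𝓀[v.adicCompletion K] := by
  let f : 𝓞 K →+* 𝓀[v.adicCompletion K] :=
    (IsLocalRing.residue _).comp (algebraMap (𝓞 K) (v.adicCompletionIntegers K))
  have hker : v.asIdeal ≤ RingHom.ker f := fun x hx ↦
    (residue_eq_zero_iff_norm_lt_one v _).mpr (FinitePlace.norm_lt_one_iff_mem K v x |>.mpr hx)
  have hsurj : Function.Surjective f := fun z ↦ by
    obtain ⟨z, rfl⟩ := IsLocalRing.residue_surjective z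
    obtain ⟨ϖ, hϖ0, hϖ1⟩ := NormedField.exists_norm_lt_one (v.adicCompletion K)
    obtain ⟨x, hx⟩ := exists_norm_sub_algebraMap_le (Valued.toNormedField.norm_le_one_iff.mpr z.2)
      (norm_pos_iff.mp hϖ0)
    refine ⟨x, (sub_eq_zero.mp ?_).symm⟩
    exact (map_sub _ _ _).symm.trans
      ((residue_eq_zero_iff_norm_lt_one v _).mpr (hx.trans_lt hϖ1))
  have := Ideal.finiteQuotientOfFreeOfNeBot _ v.ne_bot
  exact .of_surjective _ (Ideal.Quotient.lift_surjective_of_surjective v.asIdeal hker hsurj)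

instance : ProperSpace (v.adicCompletion K) := by
  have : IsDiscreteValuationRing 𝒪[v.adicCompletion K] :=
    inferInstanceAs (IsDiscreteValuationRing (v.adicCompletionIntegers K))
  open Valued.integer in
  rw [properSpace_iff_completeSpace_and_isDiscreteValuationRing_integer_and_finite_residueField]
  exact ⟨inferInstance, inferInstance, inferInstance⟩

theorem exists_dyadicIndex_eq : ∃ e : ℕ, v.valuation K 2 = WithZero.exp (-(e : ℤ)) ∧
    dyadicIndex (v.adicCompletion K) = v.asIdeal.absNorm ^ e := by
  obtain ⟨e, he⟩ : ∃ e : ℕ, v.valuation K 2 = WithZero.exp (-(e : ℤ)) := by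
    have h : v.valuation K (algebraMap (𝓞 K) K 2) = v.intValuation 2 := v.valuation_of_algebraMap 2
    rw [map_ofNat, v.intValuation_if_neg two_ne_zero] at h
    exact ⟨_, h⟩
  refine ⟨e, he, ?_⟩
  let A := (fracIdeal (2 : v.adicCompletion K)).addSubgroupOf (fracIdeal 1)
  let f : 𝓞 K →+ fracIdeal (1 : v.adicCompletion K) ⧸ A := (QuotientAddGroup.mk' A).comp <|
    (algebraMap (𝓞 K) (v.adicCompletion K)).toAddMonoidHom.codRestrict _ fun x ↦ by
      rw [mem_fracIdeal, norm_one]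
      exact FinitePlace.norm_le_one K v x
  have hsurj : Function.Surjective f := fun z ↦ by
    obtain ⟨z, rfl⟩ := QuotientAddGroup.mk_surjective z
    obtain ⟨x, hx⟩ := exists_norm_sub_algebraMap_le (z.2.trans norm_one.le) (d := 2) two_ne_zero
    refine ⟨x, QuotientAddGroup.eq.mpr ?_⟩
    rw [neg_add_eq_sub]
    exact hx
  have hker : f.ker = (v.asIdeal ^ e).toAddSubgroup := by
    ext x
    rw [AddMonoidHom.mem_ker]
    change QuotientAddGroup.mk _ = _ ↔ x ∈ v.asIdeal ^ e
    rw [QuotientAddGroup.eq_zero_iff, AddSubgroup.mem_addSubgroupOf,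
      ← v.intValuation_le_pow_iff_mem, ← v.valuation_of_algebraMap (K := K), ← he,
      ← norm_algebraMap_adicCompletion_le_iff, map_ofNat]
    rfl
  rw [← map_pow, Ideal.absNorm_apply, Submodule.cardQuot_apply]
  exact (Nat.card_congr <| ((QuotientAddGroup.quotientAddEquivOfEq hker).symm.trans
    (QuotientAddGroup.quotientKerEquivOfSurjective f hsurj)).toEquiv).symm

variable {v}

theorem dyadicIndex_eq_one (h2 : v.valuation K 2 = 1) : dyadicIndex (v.adicCompletion K) = 1 := by
  obtain ⟨e, he, hq⟩ := exists_dyadicIndex_eq v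
  rw [h2, ← WithZero.exp_zero, WithZero.exp_inj] at he
  rw [hq, show e = 0 by omega, pow_zero]

theorem mul_mem_square_of_valued_eq_one (h2 : v.valuation K 2 = 1) {x y : (v.adicCompletion K)ˣ}
    (hx : Valued.v (x : v.adicCompletion K) = 1) (hy : Valued.v (y : v.adicCompletion K) = 1)
    (hxs : x ∉ Subgroup.square _) (hys : y ∉ Subgroup.square _) :
    x * y ∈ Subgroup.square (v.adicCompletion K)ˣ := by
  let f : (v.adicCompletion K)ˣ →* (WithZero (Multiplicative ℤ))ˣ :=
    Units.map (Valued.v : Valuation (v.adicCompletion K) _)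
  have hf : Function.Surjective f := fun c ↦ by
    obtain ⟨z, hz⟩ := v.valuedAdicCompletion_surjective K (c : WithZero (Multiplicative ℤ))
    have hz0 : z ≠ 0 := (Valuation.ne_zero_iff _).mp (hz ▸ c.ne_zero)
    exact ⟨Units.mk0 z hz0, Units.ext hz⟩
  have : Infinite f.range := by
    rw [MonoidHom.range_eq_top.mpr hf]
    exact Infinite.of_injective _ Subgroup.topEquiv.symm.injective
  have hidx : (Subgroup.square f.ker).index = 2 := by
    have h := index_square_eq_two_mul_ker f
    rw [index_square_units _ two_ne_zero, dyadicIndex_eq_one h2] at h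
    omega
  let ι := (Subgroup.subtype f.ker)
  have hx' : (⟨x, Units.ext hx⟩ : f.ker) ∉ Subgroup.square f.ker := fun h ↦ hxs (h.map ι)
  have hy' : (⟨y, Units.ext hy⟩ : f.ker) ∉ Subgroup.square f.ker := fun h ↦ hys (h.map ι)
  exact ((Subgroup.mul_mem_iff_of_index_two hidx).mpr (iff_of_false hx' hy')).map ι

end Completions

section Places

open Topology Filter

universe u

variable {K : Type u} [Field K] [NumberField K]

variable (K) in
/-- The finite and the real places of `K`. Complex places carry no information about
quadratic forms and are left out. -/
abbrev Place : Type u := HeightOneSpectrum (𝓞 K) ⊕ (K →+* ℝ)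

noncomputable instance : NormedField (ULift.{u} ℝ) :=
  { ULift.field, ULift.normedCommRing with
    dist_eq x y := dist_eq_norm_neg_add x y
    norm_mul x y := norm_mul x.down y.down }

namespace Place

/-- The completion of `K` at a place. The real numbers are lifted to the universe of `K`, so that
all completions are types of one universe. -/
def Completion : Place K → Type u
  | .inl v => v.adicCompletion K
  | .inr _ => ULift.{u} ℝ

noncomputable instance : ∀ p : Place K, NormedField p.Completion
  | .inl v => inferInstanceAs (NormedField (v.adicCompletion K))
  | .inr _ => inferInstanceAs (NormedField (ULift.{u} ℝ))

/-- The embedding of `K` in its completion at a place. -/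
noncomputable def embedding : (p : Place K) → K →+* p.Completion
  | .inl v => algebraMap K (v.adicCompletion K)
  | .inr σ => (ULift.ringEquiv.symm : ℝ ≃+* ULift.{u} ℝ).toRingHom.comp σ

instance (p : Place K) : CompleteSpace p.Completion :=
  match p with
  | .inl v => inferInstanceAs (CompleteSpace (v.adicCompletion K))
  | .inr _ => inferInstanceAs (CompleteSpace (ULift.{u} ℝ))

instance (p : Place K) : CharZero p.Completion :=
  charZero_of_injective_ringHom p.embedding.injective

/-- The absolute value of `K` induced by a place. -/
noncomputable def abv (p : Place K) : AbsoluteValue K ℝ :=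
  (NormedField.toAbsoluteValue p.Completion).comp p.embedding.injective

theorem norm_embedding (p : Place K) (x : K) : ‖p.embedding x‖ = p.abv x := rfl

theorem abv_inr (σ : K →+* ℝ) (x : K) : abv (.inr σ) x = |σ x| := rfl

theorem abv_inl_le_iff {v : HeightOneSpectrum (𝓞 K)} {x y : K} :
    abv (.inl v) x ≤ abv (.inl v) y ↔ v.valuation K x ≤ v.valuation K y :=
  norm_algebraMap_adicCompletion_le_iff

theorem denseRange_embedding : ∀ p : Place K, DenseRange p.embedding
  | .inl v => HeightOneSpectrum.denseRange_algebraMap (R := 𝓞 K) (K := K) v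
  | .inr σ => by
    have hσ : DenseRange σ := Rat.denseRange_cast.mono <| by
      rintro _ ⟨r, rfl⟩
      exact ⟨r, map_ratCast σ r⟩
    exact Homeomorph.ulift.symm.surjective.denseRange.comp hσ Homeomorph.ulift.symm.continuous

theorem isNontrivial_abv : ∀ p : Place K, p.abv.IsNontrivial
  | .inl v => by
    obtain ⟨x, hx⟩ := v.valuation_exists_uniformizer K
    have hx1 : v.valuation K x < 1 := hx ▸ WithZero.exp_lt_exp.mpr (by norm_num)
    refine ⟨x, fun h ↦ WithZero.exp_ne_zero (by rw [← hx, h, map_zero]), fun h ↦ hx1.not_ge ?_⟩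
    rw [← map_one (v.valuation K), ← abv_inl_le_iff, map_one, h]
  | .inr σ => ⟨2, two_ne_zero, by rw [abv_inr, map_ofNat]; norm_num⟩

theorem le_of_isEquiv_abv_inr {σ τ : K →+* ℝ} (h : (abv (.inr σ)).IsEquiv (abv (.inr τ))) (x : K) :
    τ x ≤ σ x := by
  by_contra! hlt
  obtain ⟨M, hM⟩ := exists_nat_gt (-σ x)
  obtain ⟨r, hr1, hr2⟩ := exists_rat_btwn (show σ x + M < τ x + M by linarith)
  have hσ : abv (.inr σ) (x + M) ≤ abv (.inr σ) r := by
    rw [abv_inr, abv_inr, map_add, map_natCast, map_ratCast, abs_of_pos (by linarith)]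
    exact hr1.le.trans (le_abs_self _)
  have hτ := (h _ _).mp hσ
  rw [abv_inr, abv_inr, map_add, map_natCast, map_ratCast, abs_of_pos (by linarith),
    abs_of_pos (by linarith)] at hτ
  linarith

theorem not_isEquiv_abv_inl_inr (v : HeightOneSpectrum (𝓞 K)) (σ : K →+* ℝ) :
    ¬(abv (.inl v)).IsEquiv (abv (.inr σ)) := fun h ↦ by
  have hv : abv (.inl v) (2 : K) ≤ abv (.inl v) (1 : K) := by
    rw [abv_inl_le_iff, map_one, ← map_ofNat (algebraMap (𝓞 K) K)]
    exact v.valuation_le_one 2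
  have hσ := (h 2 1).mp hv
  rw [abv_inr, abv_inr, map_ofNat, map_one] at hσ
  norm_num at hσ

theorem eq_of_isEquiv_abv : ∀ {p q : Place K}, p.abv.IsEquiv q.abv → p = q
  | .inl v, .inl w, h => by
    refine congrArg _ (HeightOneSpectrum.eq_of_valuation_isEquiv_valuation (K := K) fun x y ↦ ?_)
    rw [← abv_inl_le_iff, ← abv_inl_le_iff]
    exact h x y
  | .inl v, .inr σ, h => absurd h (not_isEquiv_abv_inl_inr v σ)
  | .inr σ, .inl v, h => absurd h.symm (not_isEquiv_abv_inl_inr v σ)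
  | .inr _, .inr _, h => congrArg _ <| RingHom.ext fun x ↦
      le_antisymm (le_of_isEquiv_abv_inr h.symm x) (le_of_isEquiv_abv_inr h x)

theorem continuous_embedding_ofAbs (p : Place K) :
    Continuous fun x : WithAbs p.abv ↦ p.embedding x.ofAbs :=
  (AddMonoidHomClass.isometry_of_norm (p.embedding.comp (WithAbs.equiv p.abv).toRingHom)
    fun _ ↦ rfl).continuous

theorem denseRange_embedding_pi (S : Finset (Place K)) :
    DenseRange fun (x : K) (p : S) ↦ p.1.embedding x := by
  have hK := AbsoluteValue.denseRange_algebraMap_pi (fun p : S ↦ p.1.isNontrivial_abv)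
    fun p q hpq h ↦ hpq (Subtype.ext (eq_of_isEquiv_abv h))
  have hofAbs (p : S) : DenseRange fun x : WithAbs p.1.abv ↦ p.1.embedding x.ofAbs :=
    p.1.denseRange_embedding.mono <| by
      rintro _ ⟨x, rfl⟩
      exact ⟨.toAbs _ x, rfl⟩
  exact (DenseRange.piMap hofAbs).comp hK (.piMap fun p ↦ p.1.continuous_embedding_ofAbs)

theorem exists_forall_embedding_mem (S : Finset (Place K)) {U : ∀ p : Place K, Set p.Completion}
    (z : ∀ p : Place K, p.Completion) (hU : ∀ p ∈ S, U p ∈ 𝓝 (z p)) :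
    ∃ x : K, ∀ p ∈ S, p.embedding x ∈ U p := by
  obtain ⟨x, hx⟩ := (denseRange_embedding_pi S).mem_nhds
    (set_pi_mem_nhds Set.finite_univ fun p _ ↦ hU p.1 p.2)
  exact ⟨x, fun p hp ↦ hx ⟨p, hp⟩ trivial⟩

theorem eventually_isSquare_mul : ∀ (p : Place K) {x : p.Completion}, x ≠ 0 →
    ∀ᶠ y in 𝓝 x, IsSquare (x * y)
  | .inl v, _, hx =>
    eventually_isSquare_mul_of_isUltrametricDist (F := v.adicCompletion K) two_ne_zero hx
  | .inr _, x, hx => by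
    have hx' : x.down * x.down ≠ 0 := mul_self_ne_zero.mpr fun h ↦ hx (ULift.ext _ _ h)
    have hpos : ∀ᶠ r in 𝓝 x.down, 0 < x.down * r :=
      (continuous_const_mul x.down).tendsto x.down |>.eventually_const_lt
        ((mul_self_nonneg _).lt_of_ne' hx')
    have hdown : Tendsto ULift.down (𝓝 x) (𝓝 x.down) := continuous_uliftDown.tendsto x
    filter_upwards [hdown.eventually hpos] with y hy
    exact ⟨⟨√(x.down * y.down)⟩, ULift.ext _ _ (Real.mul_self_sqrt hy.le).symm⟩

end Place

end Places

section LocalSubgroups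

open Topology Filter

universe u

theorem index_square_units_ulift_real : (Subgroup.square (ULift.{u} ℝ)ˣ).index = 2 := by
  have hneg {x : (ULift.{u} ℝ)ˣ} : x ∈ Subgroup.square (ULift.{u} ℝ)ˣ ↔ 0 < (x : ULift ℝ).down := by
    have hx : (x : ULift.{u} ℝ).down ≠ 0 := fun h ↦ x.ne_zero (ULift.ext _ _ h)
    rw [Subgroup.mem_square, ← isSquare_units_iff]
    refine ⟨fun ⟨y, hy⟩ ↦ lt_of_le_of_ne ?_ hx.symm, fun h ↦ ⟨⟨√x.val.down⟩, ULift.ext _ _ ?_⟩⟩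
    · rw [hy]; exact mul_self_nonneg y.down
    · exact (Real.mul_self_sqrt h.le).symm
  refine Subgroup.index_eq_two_iff.mpr ⟨-1, fun b ↦ ?_⟩
  have hb : (b : ULift.{u} ℝ).down ≠ 0 := fun h ↦ b.ne_zero (ULift.ext _ _ h)
  rw [hneg, hneg, mul_neg_one]
  change Xor (0 < -(b : ULift ℝ).down) _
  rw [neg_pos, xor_iff_iff_not, not_lt, hb.le_iff_lt]

variable {K : Type u} [Field K] [NumberField K]

namespace Place

variable (p : Place K)

/-- The embedding of `Kˣ` in the units of the completion at a place. -/
noncomputable abbrev unitsEmbedding : Kˣ →* p.Completionˣ := Units.map p.embedding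

theorem exists_mul_unitsEmbedding_mem_square (z : p.Completionˣ) :
    ∃ x : Kˣ, z * p.unitsEmbedding x ∈ Subgroup.square p.Completionˣ := by
  obtain ⟨x, hx, hx0⟩ := p.denseRange_embedding.mem_nhds <|
    (p.eventually_isSquare_mul z.ne_zero).and (eventually_ne_nhds z.ne_zero)
  exact ⟨.mk0 x fun h ↦ hx0 (by rw [h, map_zero]), isSquare_units_iff.mp hx⟩

theorem index_comap_unitsEmbedding {H : Subgroup p.Completionˣ}
    (hH : Subgroup.square p.Completionˣ ≤ H) : (H.comap p.unitsEmbedding).index = H.index := by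
  rw [Subgroup.index_comap, ← Subgroup.relIndex_sup_right, ← Subgroup.relIndex_top_right]
  congr 1
  refine eq_top_iff.mpr fun z _ ↦ ?_
  obtain ⟨x, hx⟩ := p.exists_mul_unitsEmbedding_mem_square z
  have hz : z = (z * p.unitsEmbedding x) * p.unitsEmbedding x⁻¹ := by
    rw [map_inv, mul_inv_cancel_right]
  rw [hz, sup_comm]
  exact Subgroup.mul_mem_sup (hH hx) ⟨_, rfl⟩

/-- The elements of `Kˣ` that are squares in the completion at a place. -/
noncomputable def localSquares : Subgroup Kˣ :=
  (Subgroup.square p.Completionˣ).comap p.unitsEmbedding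

theorem mem_localSquares {x : Kˣ} : x ∈ p.localSquares ↔ IsSquare (p.embedding x) :=
  isSquare_units_iff.symm

theorem square_le_localSquares : Subgroup.square Kˣ ≤ p.localSquares :=
  square_le_comap_square _

theorem index_localSquares_inl (v : HeightOneSpectrum (𝓞 K)) :
    (localSquares (.inl v)).index = 4 * dyadicIndex (v.adicCompletion K) :=
  (index_comap_unitsEmbedding _ le_rfl).trans (index_square_units (v.adicCompletion K) two_ne_zero)

theorem index_localSquares_inr (σ : K →+* ℝ) : (localSquares (.inr σ)).index = 2 :=
  (index_comap_unitsEmbedding _ le_rfl).trans index_square_units_ulift_real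

/-- The elements of `Kˣ` that are local norms from `K(√a)` at a place. -/
noncomputable def localNorms (a : K) : Subgroup Kˣ :=
  (unitsNorm (p.embedding a)).range.comap p.unitsEmbedding

theorem mem_localNorms {a : K} {b : Kˣ} :
    b ∈ p.localNorms a ↔ ∃ x y, x ^ 2 - p.embedding a * y ^ 2 = p.embedding b :=
  mem_range_unitsNorm

theorem localSquares_le_localNorms (a : K) : p.localSquares ≤ p.localNorms a :=
  Subgroup.comap_mono square_le_range_unitsNorm

theorem localNorms_eq_top {a : Kˣ} (ha : a ∈ p.localSquares) : p.localNorms a = ⊤ := by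
  rw [localNorms, range_unitsNorm_eq_top two_ne_zero ((map_ne_zero _).mpr a.ne_zero)
    (p.mem_localSquares.mp ha), Subgroup.comap_top]

theorem index_localNorms_eq_two : ∀ (p : Place K) {a : Kˣ}, a ∉ p.localSquares →
    (p.localNorms a).index = 2
  | .inl v, a, ha => by
    have : Fact (¬IsSquare (algebraMap K (v.adicCompletion K) a)) :=
      ⟨ha ∘ (mem_localSquares (.inl v)).mpr⟩
    have hidx := index_range_unitsNorm_eq_two (a := algebraMap K (v.adicCompletion K) a) two_ne_zero
    rw [localNorms, index_comap_unitsEmbedding _ square_le_range_unitsNorm]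
    exact hidx
  | .inr σ, a, ha => by
    have hdvd := Subgroup.index_dvd_of_le (localSquares_le_localNorms (.inr σ) (a : K))
    rw [index_localSquares_inr] at hdvd
    refine ((Nat.dvd_prime Nat.prime_two).mp hdvd).resolve_left fun h ↦ ?_
    have hneg : -1 ∈ localNorms (.inr σ) (a : K) := Subgroup.index_eq_one.mp h ▸ Subgroup.mem_top _
    obtain ⟨x, y, hxy⟩ := (mem_localNorms _).mp hneg
    have hxy' : x.down ^ 2 - σ a * y.down ^ 2 = σ (-1 : Kˣ) := congrArg ULift.down hxy
    rw [Units.val_neg, Units.val_one, map_neg, map_one] at hxy'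
    have hσa : 0 ≤ σ a := by nlinarith [sq_nonneg x.down, sq_nonneg y.down]
    exact ha <| (mem_localSquares _).mpr ⟨⟨√(σ a)⟩, ULift.ext _ _ (Real.mul_self_sqrt hσa).symm⟩

end Place

end LocalSubgroups

section SUnits

variable {K : Type*} [Field K] [NumberField K]

variable (K) in
theorem index_square_units_ringOfIntegers :
    (Subgroup.square (𝓞 K)ˣ).index = 2 ^ Fintype.card (InfinitePlace K) := by
  have htors : (Subgroup.square (Units.torsion K)).index = 2 := by
    rw [square_eq_range, IsCyclic.index_powMonoidHom_range]
    exact Nat.gcd_eq_right (even_iff_two_dvd.mp (Units.even_torsionOrder K))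
  have hfree : (Subgroup.square ((𝓞 K)ˣ ⧸ Units.torsion K)).index = 2 ^ Units.rank K := by
    rw [square_eq_range, ← Units.finrank_modTorsion]
    exact AddSubgroup.index_range_nsmul (Additive ((𝓞 K)ˣ ⧸ Units.torsion K)) 2
  have hsq (c : (𝓞 K)ˣ ⧸ Units.torsion K) (hc : c ^ 2 = 1) : c = 1 := by
    obtain ⟨u, rfl⟩ := QuotientGroup.mk_surjective c
    have hu : u ^ 2 ∈ Units.torsion K := (QuotientGroup.eq_one_iff (u ^ 2)).mp hc
    exact (QuotientGroup.eq_one_iff u).mpr (IsOfFinOrder.of_pow hu two_ne_zero)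
  rw [index_square_eq_index_square_ker_mul (C := (𝓞 K)ˣ ⧸ Units.torsion K)
    (QuotientGroup.mk' (Units.torsion K)) (QuotientGroup.mk'_surjective _) hsq,
    QuotientGroup.ker_mk', htors, hfree, ← pow_succ', Units.rank,
    Nat.sub_add_cancel Fintype.card_pos]

theorem exists_valuation_lt_one_and_eq_one (v : HeightOneSpectrum (𝓞 K)) :
    ∃ x : Kˣ, v.valuation K (x : K) < 1 ∧ ∀ w ≠ v, w.valuation K (x : K) = 1 := by
  let I : nonZeroDivisors (Ideal (𝓞 K)) := ⟨v.asIdeal, mem_nonZeroDivisors_of_ne_zero v.ne_bot⟩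
  have hI : ClassGroup.mk0 (I ^ Nat.card (ClassGroup (𝓞 K))) = 1 := by
    rw [map_pow, pow_card_eq_one']
  obtain ⟨x, hx : v.asIdeal ^ Nat.card (ClassGroup (𝓞 K)) = Ideal.span {x}⟩ :=
    ((ClassGroup.mk0_eq_one_iff _).mp hI).principal
  have hx0 : x ≠ 0 := by
    rintro rfl
    exact v.ne_bot (eq_zero_of_pow_eq_zero (hx.trans Ideal.span_singleton_zero))
  have hmem (w : HeightOneSpectrum (𝓞 K)) :
      x ∈ w.asIdeal ↔ v.asIdeal ^ Nat.card (ClassGroup (𝓞 K)) ≤ w.asIdeal := by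
    rw [hx, Ideal.span_singleton_le_iff_mem]
  refine ⟨.mk0 (algebraMap (𝓞 K) K x) (by simpa using hx0), ?_, fun w hw ↦ ?_⟩
  · exact v.valuation_lt_one_iff_mem x |>.mpr <| (hmem v).mpr <| Ideal.pow_le_self Nat.card_pos.ne'
  · refine w.valuation_eq_one_iff_notMem |>.mpr fun h ↦ hw.symm <| HeightOneSpectrum.ext ?_
    exact v.isMaximal.eq_of_le w.isPrime.ne_top (Ideal.IsPrime.le_of_pow_le ((hmem w).mp h))

theorem range_map_algebraMap_eq_unit_empty :
    (Units.map (algebraMap (𝓞 K) K).toMonoidHom).range =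
      (∅ : Set (HeightOneSpectrum (𝓞 K))).unit K := by
  ext x
  constructor
  · rintro ⟨y, rfl⟩ v -
    exact v.valuation_eq_one_iff_notMem |>.mpr fun h ↦
      v.isPrime.ne_top (Ideal.eq_top_of_isUnit_mem _ h y.isUnit)
  · intro hx
    obtain ⟨y, hy⟩ := HeightOneSpectrum.mem_integers_of_valuation_le_one K (x : K)
      fun v ↦ (hx v (Set.notMem_empty v)).le
    obtain ⟨z, hz⟩ := HeightOneSpectrum.mem_integers_of_valuation_le_one K ((x⁻¹ : Kˣ) : K)
      fun v ↦ (inv_mem hx v (Set.notMem_empty v)).le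
    have hyz : y * z = 1 := FaithfulSMul.algebraMap_injective (𝓞 K) K <| by
      rw [map_mul, hy, hz, map_one, Units.mul_inv]
    exact ⟨⟨y, z, hyz, mul_comm y z ▸ hyz⟩, Units.ext hy⟩

theorem index_square_unit_insert {S : Set (HeightOneSpectrum (𝓞 K))}
    {v : HeightOneSpectrum (𝓞 K)} (hv : v ∉ S) :
    (Subgroup.square ((insert v S).unit K)).index = 2 * (Subgroup.square (S.unit K)).index := by
  let f : (insert v S).unit K →* Multiplicative ℤ := v.valuationOfNeZero.comp (Subgroup.subtype _)
  have hval (x : (insert v S).unit K) : f x = 1 ↔ v.valuation K (x : Kˣ) = 1 := by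
    rw [← WithZero.coe_inj, ← HeightOneSpectrum.valuationOfNeZero_eq]; rfl
  have hmem (x : (insert v S).unit K) : x ∈ f.ker ↔ (x : Kˣ) ∈ S.unit K := by
    refine (hval x).trans ⟨fun h w hw ↦ ?_, fun h ↦ h v hv⟩
    obtain rfl | hwv := eq_or_ne w v
    exacts [h, x.2 w fun h' ↦ h'.elim hwv hw]
  have hle : S.unit K ≤ (insert v S).unit K := fun _ hx w hw ↦
    hx w (mt (Set.mem_insert_of_mem v) hw)
  have hker : f.ker = (S.unit K).subgroupOf ((insert v S).unit K) := Subgroup.ext hmem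
  obtain ⟨x, hx, hx'⟩ := exists_valuation_lt_one_and_eq_one v
  let y : (insert v S).unit K := ⟨x, fun w hw ↦ hx' w fun h ↦ hw (h ▸ Set.mem_insert v S)⟩
  have hinf : Infinite f.range := by
    have hfy : ¬IsOfFinOrder (⟨f y, y, rfl⟩ : f.range) :=
      not_isOfFinOrder_of_isMulTorsionFree fun h ↦ hx.ne ((hval y).mp (Subtype.ext_iff.mp h))
    exact .of_injective _ (injective_pow_iff_not_isOfFinOrder.mpr hfy)
  rw [index_square_eq_two_mul_ker f, hker, index_square_congr (Subgroup.subgroupOfEquivOfLe hle)]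

/-- The group of `S`-units of `K`, for a finite set `S` of primes. -/
noncomputable abbrev sUnits (S : Finset (HeightOneSpectrum (𝓞 K))) : Subgroup Kˣ :=
  (S : Set (HeightOneSpectrum (𝓞 K))).unit K

theorem sUnits_mono {S T : Finset (HeightOneSpectrum (𝓞 K))} (h : S ⊆ T) :
    sUnits S ≤ sUnits T := fun _ hx v hv ↦ hx v (mt (@h v) hv)

theorem index_square_sUnits (S : Finset (HeightOneSpectrum (𝓞 K))) :
    (Subgroup.square (sUnits S)).index = 2 ^ (S.card + Fintype.card (InfinitePlace K)) := by
  classical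
  induction S using Finset.induction_on with
  | empty =>
    have hinj : Function.Injective (Units.map (algebraMap (𝓞 K) K).toMonoidHom) :=
      Units.map_injective (FaithfulSMul.algebraMap_injective (𝓞 K) K)
    rw [Finset.card_empty, zero_add, sUnits, Finset.coe_empty,
      ← index_square_units_ringOfIntegers, index_square_congr (MonoidHom.ofInjective hinj),
      range_map_algebraMap_eq_unit_empty]
  | insert v S hv ih =>
    rw [sUnits, Finset.coe_insert, index_square_unit_insert (Finset.mem_coe.not.mpr hv), ih,
      Finset.card_insert_of_notMem hv, add_right_comm, pow_succ']

theorem isSquare_sUnits_iff {S : Finset (HeightOneSpectrum (𝓞 K))} {x : sUnits S} :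
    IsSquare x ↔ IsSquare (x : Kˣ) := by
  refine ⟨fun h ↦ h.map (Subgroup.subtype _), fun ⟨y, hy⟩ ↦
    ⟨⟨y, fun v hv ↦ ?_⟩, Subtype.ext hy⟩⟩
  have hxv := x.2 v hv
  rw [hy, Units.val_mul, map_mul, ← pow_two] at hxv
  exact (pow_eq_one_iff_of_nonneg zero_le two_ne_zero).mp hxv

theorem relIndex_square_sUnits (S : Finset (HeightOneSpectrum (𝓞 K))) :
    (Subgroup.square Kˣ).relIndex (sUnits S) =
      2 ^ (S.card + Fintype.card (InfinitePlace K)) := by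
  rw [← index_square_sUnits, Subgroup.relIndex]
  congr 1
  exact Subgroup.ext fun x ↦ isSquare_sUnits_iff.symm

theorem finite_valuation_ne_one {x : K} (hx : x ≠ 0) :
    {v : HeightOneSpectrum (𝓞 K) | v.valuation K x ≠ 1}.Finite := by
  refine ((HeightOneSpectrum.Support.finite (𝓞 K) x).union
    (HeightOneSpectrum.Support.finite (𝓞 K) x⁻¹)).subset fun v hv ↦ ?_
  refine (lt_or_gt_of_ne hv).symm.imp id fun h ↦ ?_
  change 1 < v.valuation K x⁻¹
  rw [map_inv₀]
  exact (one_lt_inv₀ (by simpa [zero_lt_iff] using hx)).mpr h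

theorem exists_forall_mem_sUnits {ι : Type*} [Finite ι] (x : ι → Kˣ) :
    ∃ S : Finset (HeightOneSpectrum (𝓞 K)), ∀ i, x i ∈ sUnits S :=
  ⟨(Set.finite_iUnion fun i ↦ finite_valuation_ne_one (x i).ne_zero).toFinset, fun i _ hv ↦
    by_contra fun h ↦ hv <| (Set.Finite.mem_toFinset _).mpr <| Set.mem_iUnion.mpr ⟨i, h⟩⟩

/-- The class group becomes trivial after inverting the primes in `S`: every divisor of `K`
agrees with a principal divisor outside `S`. -/
def HasTrivialClassGroup (S : Set (HeightOneSpectrum (𝓞 K))) : Prop :=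
  ∀ n : HeightOneSpectrum (𝓞 K) →₀ ℤ, ∃ x : Kˣ, ∀ v ∉ S,
    v.valuation K (x : K) = WithZero.exp (n v)

theorem hasTrivialClassGroup_of_exists_uniformizer {S : Set (HeightOneSpectrum (𝓞 K))}
    (h : ∀ v ∉ S, ∃ x : Kˣ, v.valuation K (x : K) = WithZero.exp (-1 : ℤ) ∧
      ∀ w ∉ S, w ≠ v → w.valuation K (x : K) = 1) : HasTrivialClassGroup S := fun n ↦ by
  induction n using Finsupp.induction_linear with
  | zero => exact ⟨1, fun v _ ↦ by simp⟩
  | add m n hm hn =>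
    obtain ⟨x, hx⟩ := hm
    obtain ⟨y, hy⟩ := hn
    exact ⟨x * y, fun v hv ↦ by
      rw [Units.val_mul, map_mul, hx v hv, hy v hv, Finsupp.add_apply, WithZero.exp_add]⟩
  | single v k =>
    by_cases hv : v ∈ S
    · exact ⟨1, fun w hw ↦ by simp [Finsupp.single_eq_of_ne (ne_of_mem_of_not_mem hv hw).symm]⟩
    obtain ⟨x, hx, hx'⟩ := h v hv
    refine ⟨x ^ (-k), fun w hw ↦ ?_⟩
    rw [Units.val_zpow_eq_zpow_val, map_zpow₀]
    obtain rfl | hwv := eq_or_ne w v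
    · rw [hx, ← WithZero.exp_zsmul, Finsupp.single_eq_same]; simp
    · rw [hx' w hw hwv, one_zpow, Finsupp.single_eq_of_ne hwv, WithZero.exp_zero]

theorem HasTrivialClassGroup.mono {S T : Set (HeightOneSpectrum (𝓞 K))}
    (h : HasTrivialClassGroup S) (hST : S ⊆ T) : HasTrivialClassGroup T := fun n ↦
  (h n).imp fun _ hx v hv ↦ hx v (mt (@hST v) hv)

theorem HasTrivialClassGroup.exists_valuation_eq {S : Set (HeightOneSpectrum (𝓞 K))}
    (h : HasTrivialClassGroup S) {f : HeightOneSpectrum (𝓞 K) → WithZero (Multiplicative ℤ)}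
    (hf0 : ∀ v, f v ≠ 0) (hf : {v | f v ≠ 1}.Finite) :
    ∃ x : Kˣ, ∀ v ∉ S, v.valuation K (x : K) = f v := by
  have hlog : (Function.support fun v ↦ WithZero.log (f v)).Finite :=
    hf.subset fun v ↦ mt fun h1 ↦ (congrArg _ h1).trans WithZero.log_one
  refine (h (.ofSupportFinite _ hlog)).imp fun x hx v hv ↦ ?_
  rw [hx v hv, Finsupp.ofSupportFinite_coe, WithZero.exp_log (hf0 v)]

theorem HasTrivialClassGroup.exists_valuation_eq_max {S : Set (HeightOneSpectrum (𝓞 K))}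
    (h : HasTrivialClassGroup S) {x y : K} (hxy : x ≠ 0 ∨ y ≠ 0) :
    ∃ c : Kˣ, ∀ v ∉ S, v.valuation K (c : K) = max (v.valuation K x) (v.valuation K y) := by
  refine h.exists_valuation_eq (fun v ↦ ?_) ?_
  · rw [← zero_lt_iff, lt_max_iff]
    exact hxy.imp (fun hx ↦ zero_lt_iff.mpr (by simpa)) fun hy ↦ zero_lt_iff.mpr (by simpa)
  · by_cases hx : x = 0
    · simpa [hx] using finite_valuation_ne_one (hxy.resolve_left (not_not_intro hx))
    by_cases hy : y = 0
    · simpa [hy] using finite_valuation_ne_one hx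
    refine ((finite_valuation_ne_one hx).union (finite_valuation_ne_one hy)).subset fun v hv ↦ ?_
    contrapose! hv
    simp_all

theorem valuation_eq_exp_neg_one_of_mul_eq_span {v : HeightOneSpectrum (𝓞 K)}
    {I : Ideal (𝓞 K)} {x : 𝓞 K} (hx : v.asIdeal * I = Ideal.span {x}) (hI : ¬I ≤ v.asIdeal) :
    v.valuation K (x : K) = WithZero.exp (-1 : ℤ) := by
  obtain ⟨j, hjI, hjv⟩ := SetLike.not_le_iff_exists.mp hI
  obtain ⟨π, hπ⟩ := v.intValuation_exists_uniformizer
  have hxv : v.intValuation x ≤ WithZero.exp (-1 : ℤ) := by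
    refine (v.intValuation_le_pow_iff_mem x 1).mpr ?_
    rw [pow_one]
    have hxI : x ∈ v.asIdeal * I := by rw [hx]; exact Ideal.mem_span_singleton_self x
    exact Ideal.mul_le_left (I := v.asIdeal) hxI
  have hπv : π ∈ v.asIdeal := by
    rw [← pow_one v.asIdeal, ← v.intValuation_le_pow_iff_mem, hπ]
    exact le_rfl
  have hπj : π * j ∈ Ideal.span {x} := by rw [← hx]; exact Ideal.mul_mem_mul hπv hjI
  obtain ⟨s, hs⟩ := Ideal.mem_span_singleton.mp hπj
  have hsv : WithZero.exp (-1 : ℤ) = v.intValuation x * v.intValuation s := by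
    rw [← map_mul, ← hs, map_mul, hπ, v.intValuation_eq_one_iff.mpr hjv, mul_one]
  refine (v.valuation_of_algebraMap x).trans (le_antisymm hxv (hsv.trans_le ?_))
  exact mul_le_of_le_one_right' (v.intValuation_le_one s)

variable (K) in
theorem exists_finset_hasTrivialClassGroup :
    ∃ S : Finset (HeightOneSpectrum (𝓞 K)),
      HasTrivialClassGroup (S : Set (HeightOneSpectrum (𝓞 K))) := by
  choose I hI using ClassGroup.mk0_surjective (R := 𝓞 K)
  let T := ⋃ c, {v : HeightOneSpectrum (𝓞 K) | v.asIdeal ∣ (I c : Ideal (𝓞 K))}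
  have hfin : T.Finite := Set.finite_iUnion fun c ↦
    Ideal.finite_factors (nonZeroDivisors.ne_zero (I c).2)
  refine ⟨hfin.toFinset, hasTrivialClassGroup_of_exists_uniformizer fun v hv ↦ ?_⟩
  rw [Set.Finite.coe_toFinset] at hv ⊢
  have hmem {w} (hw : w ∉ T) (c) : ¬(I c : Ideal (𝓞 K)) ≤ w.asIdeal := fun h ↦
    hw (Set.mem_iUnion.mpr ⟨c, Ideal.dvd_iff_le.mpr h⟩)
  let V : nonZeroDivisors (Ideal (𝓞 K)) := ⟨v.asIdeal, mem_nonZeroDivisors_of_ne_zero v.ne_bot⟩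
  let c := (ClassGroup.mk0 V)⁻¹
  have hVI : ClassGroup.mk0 (V * I c) = 1 := by rw [map_mul, hI, mul_inv_cancel]
  obtain ⟨x, hx : v.asIdeal * I c = Ideal.span {x}⟩ :=
    ((ClassGroup.mk0_eq_one_iff _).mp hVI).principal
  have hxv := valuation_eq_exp_neg_one_of_mul_eq_span hx (hmem hv c)
  have hx0 : (x : K) ≠ 0 := fun h ↦ WithZero.exp_ne_zero (by rw [← hxv, h, map_zero])
  refine ⟨.mk0 x hx0, hxv, fun w hw hwv ↦ w.valuation_eq_one_iff_notMem.mpr fun hxw ↦ ?_⟩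
  have hle : v.asIdeal * I c ≤ w.asIdeal := hx ▸ (Ideal.span_singleton_le_iff_mem _).mpr hxw
  refine (w.isPrime.mul_le.mp hle).elim (fun h ↦ hwv ?_) (hmem hw c)
  exact HeightOneSpectrum.ext (v.isMaximal.eq_of_le w.isPrime.ne_top h).symm

/-- A finite set of primes is large if it contains the primes above `2` and generates the class
group; outside such a set a quadratic extension generated by the root of an `S`-unit behaves like an
extension of principal ideal domains. -/
structure IsLarge (S : Finset (HeightOneSpectrum (𝓞 K))) : Prop where
  valuation_two : ∀ v ∉ S, v.valuation K 2 = 1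
  hasTrivialClassGroup : HasTrivialClassGroup (S : Set (HeightOneSpectrum (𝓞 K)))

theorem IsLarge.mono {S T : Finset (HeightOneSpectrum (𝓞 K))} (h : IsLarge S) (hST : S ⊆ T) :
    IsLarge T :=
  ⟨fun v hv ↦ h.valuation_two v (mt (@hST v) hv), h.hasTrivialClassGroup.mono hST⟩

variable (K) in
theorem exists_isLarge : ∃ S : Finset (HeightOneSpectrum (𝓞 K)), IsLarge S := by
  classical
  obtain ⟨C, hC⟩ := exists_finset_hasTrivialClassGroup K
  obtain ⟨T, hT⟩ := exists_forall_mem_sUnits fun _ : Unit ↦ Units.mk0 (2 : K) two_ne_zero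
  exact ⟨C ∪ T, fun v hv ↦ hT () v fun h ↦ hv (Finset.mem_union_right C h),
    hC.mono (Finset.coe_subset.mpr Finset.subset_union_left)⟩

end SUnits

section DenseExtension

open Topology

theorem exists_continuous_ringHom_comp_eq {K F E : Type*} [Field K] [NormedField F] [NormedField E]
    [CompleteSpace E] {i : K →+* F} (hi : DenseRange i) {j : K →+* E}
    (hj : ∀ ε > 0, ∃ δ > 0, ∀ x, ‖i x‖ < δ → ‖j x‖ < ε) :
    ∃ g : F →+* E, Continuous g ∧ ∀ x, g (i x) = j x := by
  let : PseudoMetricSpace K := PseudoMetricSpace.induced i inferInstance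
  have hi' : IsUniformInducing i := ⟨rfl⟩
  have hj' : UniformContinuous j := Metric.uniformContinuous_iff.mpr fun ε hε ↦ by
    obtain ⟨δ, hδ, hδε⟩ := hj ε hε
    refine ⟨δ, hδ, fun x y hxy ↦ ?_⟩
    change dist (i x) (i y) < δ at hxy
    rw [dist_eq_norm, ← map_sub] at hxy ⊢
    exact hδε _ hxy
  exact ⟨IsDenseInducing.extendRingHom hi' hi hj',
    (uniformContinuous_uniformly_extend hi' hi hj').continuous,
    fun x ↦ (hi'.isDenseInducing hi).extend_eq hj'.continuous x⟩

end DenseExtension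

section PlacesAbove

variable {K L : Type*} [Field K] [NumberField K] [Field L] (f : K →+* L)

/-- The prime of `K` induced by a prime of `L` along `f : K →+* L`. -/
noncomputable def primeComap (w : HeightOneSpectrum (𝓞 L)) : HeightOneSpectrum (𝓞 K) :=
  letI := f.toAlgebra
  w.under (𝓞 K)

theorem exists_primeComap_eq (v : HeightOneSpectrum (𝓞 K)) :
    ∃ w : HeightOneSpectrum (𝓞 L), primeComap f w = v := by
  let := f.toAlgebra
  obtain ⟨Q, hQ, hQv⟩ := Ideal.exists_maximal_ideal_liesOver_of_isIntegral (S := 𝓞 L) v.asIdeal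
  exact ⟨⟨Q, hQ.isPrime, Ideal.ne_bot_of_liesOver_of_ne_bot v.ne_bot Q⟩,
    HeightOneSpectrum.ext hQv.over.symm⟩

variable [NumberField L]

theorem valuation_primeComap (w : HeightOneSpectrum (𝓞 L)) :
    ∃ e ≠ 0, ∀ x, w.valuation L (f x) = (primeComap f w).valuation K x ^ e := by
  let := f.toAlgebra
  have : w.asIdeal.LiesOver (primeComap f w).asIdeal := ⟨rfl⟩
  exact ⟨_, Ideal.IsDedekindDomain.ramificationIdx'_ne_zero_of_liesOver w.asIdeal
    (primeComap f w).ne_bot, fun x ↦ (HeightOneSpectrum.valuation_liesOver L _ w x).symm⟩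

theorem valuation_primeComap_le_iff (w : HeightOneSpectrum (𝓞 L)) {x y : K} :
    (primeComap f w).valuation K x ≤ (primeComap f w).valuation K y ↔
      w.valuation L (f x) ≤ w.valuation L (f y) := by
  obtain ⟨e, he, hf⟩ := valuation_primeComap f w
  rw [hf, hf, pow_le_pow_iff_left₀ zero_le zero_le he]

theorem valuation_primeComap_eq_one_iff (w : HeightOneSpectrum (𝓞 L)) {x : K} :
    w.valuation L (f x) = 1 ↔ (primeComap f w).valuation K x = 1 := by
  obtain ⟨e, he, hf⟩ := valuation_primeComap f w
  rw [hf, pow_eq_one_iff_of_nonneg zero_le he]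

theorem finite_preimage_primeComap {S : Set (HeightOneSpectrum (𝓞 K))} (hS : S.Finite) :
    (primeComap f ⁻¹' S).Finite := by
  refine hS.preimage' fun v _ ↦ ?_
  obtain ⟨x, hx, -⟩ := exists_valuation_lt_one_and_eq_one v
  refine (finite_valuation_ne_one ((map_ne_zero f).mpr x.ne_zero)).subset ?_
  rintro w rfl hw
  rw [valuation_primeComap_eq_one_iff] at hw
  exact hx.ne hw

namespace Place

/-- The place of `K` induced by a place of `L` along `f : K →+* L`. -/
noncomputable def comap : Place L → Place K
  | .inl w => .inl (primeComap f w)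
  | .inr σ => .inr (σ.comp f)

theorem abv_comap_le_iff : ∀ (q : Place L) {x y : K},
    (q.comap f).abv x ≤ (q.comap f).abv y ↔ q.abv (f x) ≤ q.abv (f y)
  | .inl w, x, y => by
    rw [comap, abv_inl_le_iff, abv_inl_le_iff, valuation_primeComap_le_iff]
  | .inr _, _, _ => Iff.rfl

theorem exists_completion_ringHom (q : Place L) :
    ∃ g : (q.comap f).Completion →+* q.Completion, Continuous g ∧
      ∀ x, g ((q.comap f).embedding x) = q.embedding (f x) := by
  refine exists_continuous_ringHom_comp_eq (j := q.embedding.comp f)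
    (denseRange_embedding _) fun ε hε ↦ ?_
  obtain ⟨c, hc0, hc1⟩ := ((q.comap f).isNontrivial_abv).exists_abv_lt_one
  have hfc : q.abv (f c) < 1 := by
    rw [← not_le, ← map_one (q.comap f).abv, abv_comap_le_iff, map_one, map_one, not_le] at hc1
    exact hc1
  obtain ⟨n, hn⟩ := exists_pow_lt_of_lt_one hε hfc
  refine ⟨(q.comap f).abv (c ^ n), (AbsoluteValue.pos_iff _).mpr (pow_ne_zero n hc0), fun x hx ↦ ?_⟩
  refine lt_trans ?_ ((map_pow f c n ▸ map_pow q.abv (f c) n).trans_lt hn)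
  exact lt_of_not_ge fun h ↦ hx.not_ge ((abv_comap_le_iff f q).mpr h)

variable {f} in
theorem localSquares_comap_le_comap {q : Place L} {x : Kˣ} (hx : x ∈ (q.comap f).localSquares) :
    Units.map f x ∈ q.localSquares := by
  obtain ⟨g, -, hg⟩ := q.exists_completion_ringHom f
  rw [mem_localSquares, Units.coe_map] at *
  rw [MonoidHom.coe_coe, ← hg]
  exact hx.map g

end Place

end PlacesAbove

section QuadraticPlaces

variable {K : Type*} [Field K]

theorem primeComap_algebraMap_primeComap_star {a : K} [Fact (¬IsSquare a)]
    (w : HeightOneSpectrum (𝓞 (SqrtExt a))) :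
    primeComap (algebraMap K _) (primeComap (starRingEnd _) w) =
      primeComap (algebraMap K _) w := by
  change primeComap ((starRingEnd _).comp (algebraMap K _)) w = _
  rw [starRingEnd_comp_algebraMap_sqrtExt]

variable [NumberField K]

instance {a : K} [Fact (¬IsSquare a)] : NumberField (SqrtExt a) :=
  have : CharZero (SqrtExt a) :=
    charZero_of_injective_algebraMap (algebraMap K (SqrtExt a)).injective
  NumberField.of_module_finite K (SqrtExt a)

open Topology

variable {a : Kˣ} [Fact (¬IsSquare (a : K))]

namespace Place

open QuadraticAlgebra (omega)

theorem exists_abv_sub_lt_abv_add {q : Place (SqrtExt (a : K))}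
    (ha : a ∈ (q.comap (algebraMap K _)).localSquares) :
    ∃ c : K, q.abv (algebraMap K _ c - omega) < q.abv (algebraMap K _ c + omega) := by
  obtain ⟨g, hgc, hg⟩ := q.exists_completion_ringHom (algebraMap K _)
  have hω0 : (omega : SqrtExt (a : K)) ≠ 0 := fun h ↦ one_ne_zero (congrArg QuadraticAlgebra.im h)
  obtain ⟨r, hr⟩ : ∃ r, g r = q.embedding omega := by
    obtain ⟨r, hr⟩ := (mem_localSquares _).mp ha
    have hω : (omega * omega : SqrtExt (a : K)) = algebraMap K _ a := by ext <;> simp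
    have hgr : q.embedding omega * q.embedding omega = g r * g r := by
      rw [← map_mul, ← map_mul, ← hr, hg, hω]
    exact (mul_self_eq_mul_self_iff.mp hgr).elim (⟨r, ·.symm⟩) fun h ↦ ⟨-r, by rw [map_neg, h]⟩
  have hopen : IsOpen {z | ‖g z - q.embedding omega‖ < ‖g z + q.embedding omega‖} :=
    isOpen_lt (by fun_prop) (by fun_prop)
  obtain ⟨c, hc⟩ := (denseRange_embedding _).exists_mem_open hopen ⟨r, by
    rw [Set.mem_ofPred, hr, sub_self, norm_zero, norm_pos_iff, ← two_mul]
    exact mul_ne_zero two_ne_zero ((map_ne_zero _).mpr hω0)⟩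
  rw [Set.mem_ofPred, hg, ← map_sub, ← map_add, norm_embedding, norm_embedding] at hc
  exact ⟨c, hc⟩

/-- If `√a` lies in `K_p`, an element of `K` close to `√a` separates the two conjugate places. -/
theorem comap_star_ne {q : Place (SqrtExt (a : K))}
    (ha : a ∈ (q.comap (algebraMap K _)).localSquares) : q.comap (starRingEnd _) ≠ q := by
  intro hq
  obtain ⟨c, hc⟩ := exists_abv_sub_lt_abv_add ha
  have hstar := abv_comap_le_iff (starRingEnd _) q (x := algebraMap K _ c + omega)
    (y := algebraMap K _ c - omega)
  have hadd : starRingEnd _ (algebraMap K _ c + omega : SqrtExt (a : K)) =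
      algebraMap K _ c - omega := by ext <;> simp [starRingEnd_apply]
  have hsub : starRingEnd _ (algebraMap K _ c - omega : SqrtExt (a : K)) =
      algebraMap K _ c + omega := by ext <;> simp [starRingEnd_apply]
  rw [hq, hadd, hsub] at hstar
  exact hc.not_ge (hstar.mpr hc.le)

theorem exists_comap_algebraMap_eq : ∀ {p : Place K}, a ∈ p.localSquares →
    ∃ q : Place (SqrtExt (a : K)), q.comap (algebraMap K _) = p
  | .inl v, _ => (exists_primeComap_eq (algebraMap K _) v).imp' .inl fun _ ↦ congrArg _
  | .inr σ, ha => by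
    obtain ⟨r, hr⟩ := (mem_localSquares _).mp ha
    let := σ.toAlgebra
    have hr' : r.down * r.down = (a : K) • 1 + (0 : K) • r.down := by
      rw [zero_smul, add_zero, Algebra.smul_def, mul_one]
      exact (congrArg ULift.down hr).symm
    exact ⟨.inr (QuadraticAlgebra.lift ⟨r.down, hr'⟩).toRingHom, congrArg _ (RingHom.ext fun x ↦
      (QuadraticAlgebra.lift ⟨r.down, hr'⟩).commutes x)⟩

end Place

end QuadraticPlaces

section Counting

variable {K : Type*} [Field K] [NumberField K]

/-- The places in `S` together with all real places. -/
noncomputable def placesOver (S : Finset (HeightOneSpectrum (𝓞 K))) : Finset (Place K) :=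
  S.disjSum Finset.univ

theorem inl_mem_placesOver {S : Finset (HeightOneSpectrum (𝓞 K))} {v} :
    .inl v ∈ placesOver S ↔ v ∈ S := Finset.inl_mem_disjSum

theorem inr_mem_placesOver (S : Finset (HeightOneSpectrum (𝓞 K))) (σ : K →+* ℝ) :
    .inr σ ∈ placesOver S := Finset.inr_mem_disjSum.mpr (Finset.mem_univ σ)

variable (K) in
theorem card_ringHom_real : Fintype.card (K →+* ℝ) = InfinitePlace.nrRealPlaces K := by
  classical
  rw [← InfinitePlace.card_real_embeddings]
  exact Fintype.card_congr
    { toFun σ := ⟨Complex.ofRealHom.comp σ, ComplexEmbedding.isReal_iff.mpr <| by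
        ext x; exact Complex.conj_ofReal (σ x)⟩
      invFun φ := φ.2.embedding
      left_inv σ := by ext x; exact Complex.ofReal_injective <| by simp
      right_inv φ := by ext x; exact φ.2.coe_embedding_apply x }

theorem prod_dyadicIndex {S : Finset (HeightOneSpectrum (𝓞 K))}
    (hS : ∀ v ∉ S, v.valuation K 2 = 1) :
    ∏ v ∈ S, dyadicIndex (v.adicCompletion K) = 2 ^ Module.finrank ℚ K := by
  classical
  have h2 : (2 : 𝓞 K) ≠ 0 := two_ne_zero
  let I : Ideal (𝓞 K) := Ideal.span {2}
  have hI0 : I ≠ 0 := by simp [I]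
  let n (v : HeightOneSpectrum (𝓞 K)) : ℕ :=
    (Associates.mk v.asIdeal).count (Associates.mk I).factors
  have hval (v : HeightOneSpectrum (𝓞 K)) : v.valuation K 2 = WithZero.exp (-n v : ℤ) := by
    rw [← map_ofNat (algebraMap (𝓞 K) K) 2, HeightOneSpectrum.valuation_of_algebraMap,
      HeightOneSpectrum.intValuation_if_neg _ h2]
  have hindex (v : HeightOneSpectrum (𝓞 K)) :
      dyadicIndex (v.adicCompletion K) = Ideal.absNorm (v.maxPowDividing I) := by
    obtain ⟨e, he, hq⟩ := exists_dyadicIndex_eq v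
    rw [hval, WithZero.exp_inj, neg_inj, Nat.cast_inj] at he
    rw [hq, ← he, HeightOneSpectrum.maxPowDividing, map_pow]
  have hsupp : (Function.mulSupport fun v : HeightOneSpectrum (𝓞 K) ↦ v.maxPowDividing I) ⊆ S := by
    refine fun v hv ↦ by_contra fun hvS ↦ hv ?_
    have h1 := hS v hvS
    rw [hval, ← WithZero.exp_zero, WithZero.exp_inj, neg_eq_zero, Nat.cast_eq_zero] at h1
    exact (congrArg (v.asIdeal ^ ·) h1).trans (pow_zero _)
  calc ∏ v ∈ S, dyadicIndex (v.adicCompletion K)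
      = Ideal.absNorm (∏ v ∈ S, v.maxPowDividing I) := by
        rw [map_prod]; exact Finset.prod_congr rfl fun v _ ↦ hindex v
    _ = Ideal.absNorm I := by
        rw [← finprod_eq_prod_of_mulSupport_subset _ hsupp,
          Ideal.finprod_heightOneSpectrum_factorization hI0]
    _ = 2 ^ Module.finrank ℚ K := by
        rw [Ideal.absNorm_span_singleton, ← map_ofNat (algebraMap ℤ (𝓞 K)) 2,
          Algebra.norm_algebraMap, Int.natAbs_pow, RingOfIntegers.rank]
        rfl

theorem prod_index_localSquares {S : Finset (HeightOneSpectrum (𝓞 K))}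
    (hS : ∀ v ∉ S, v.valuation K 2 = 1) :
    ∏ p ∈ placesOver S, p.localSquares.index =
      4 ^ (S.card + Fintype.card (InfinitePlace K)) := by
  rw [placesOver, Finset.prod_disjSum]
  simp only [Place.index_localSquares_inl, Place.index_localSquares_inr, Finset.prod_mul_distrib,
    prod_dyadicIndex hS, Finset.prod_const, Finset.card_univ]
  rw [card_ringHom_real, InfinitePlace.card_eq_nrRealPlaces_add_nrComplexPlaces,
    ← InfinitePlace.card_add_two_mul_card_eq_rank, show 4 = 2 ^ 2 from rfl, ← pow_mul, ← pow_mul,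
    ← pow_add, ← pow_add]
  ring_nf

section PrimesAbove

variable {L : Type*} [Field L] [NumberField L] (f : K →+* L)

/-- The primes of `L` above a finite set of primes of `K`. -/
noncomputable def primesAbove (S : Finset (HeightOneSpectrum (𝓞 K))) :
    Finset (HeightOneSpectrum (𝓞 L)) := (finite_preimage_primeComap f S.finite_toSet).toFinset

theorem mem_primesAbove {S : Finset (HeightOneSpectrum (𝓞 K))} {w : HeightOneSpectrum (𝓞 L)} :
    w ∈ primesAbove f S ↔ primeComap f w ∈ S := by
  rw [primesAbove, Set.Finite.mem_toFinset, Set.mem_preimage, Finset.mem_coe]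

end PrimesAbove

variable {a : Kˣ} [Fact (¬IsSquare (a : K))]

open scoped Classical in
theorem two_mul_card_le_card_primesAbove_add (S : Finset (HeightOneSpectrum (𝓞 K))) :
    2 * S.card ≤ (primesAbove (algebraMap K (SqrtExt (a : K))) S).card +
      (S.filter fun v ↦ a ∉ Place.localSquares (.inl v)).card := by
  set f := algebraMap K (SqrtExt (a : K))
  rw [Finset.card_eq_sum_card_fiberwise (f := primeComap f) (t := S)
    fun w hw ↦ (mem_primesAbove f).mp hw, Finset.card_filter, ← Finset.sum_add_distrib, mul_comm,
    ← smul_eq_mul]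
  refine Finset.card_nsmul_le_sum _ _ _ fun v hv ↦ ?_
  obtain ⟨w, rfl⟩ := exists_primeComap_eq f v
  have hmem {w' : HeightOneSpectrum (𝓞 (SqrtExt (a : K)))} (h : primeComap f w' = primeComap f w) :
      w' ∈ (primesAbove f S).filter (primeComap f · = primeComap f w) :=
    Finset.mem_filter.mpr ⟨(mem_primesAbove f).mpr (h ▸ hv), h⟩
  split_ifs with ha
  · exact Finset.one_lt_card.mpr ⟨primeComap (starRingEnd _) w,
      hmem (primeComap_algebraMap_primeComap_star w), w, hmem rfl,
      fun h ↦ Place.comap_star_ne (q := .inl w) ha (congrArg _ h)⟩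
  · exact Nat.succ_le_succ (Finset.card_pos.mpr ⟨w, hmem rfl⟩)

open scoped Classical in
theorem two_mul_card_ringHom_real_le :
    2 * Fintype.card (K →+* ℝ) ≤ Fintype.card (SqrtExt (a : K) →+* ℝ) +
      2 * (Finset.univ.filter fun σ : K →+* ℝ ↦ a ∉ Place.localSquares (.inr σ)).card := by
  set f := algebraMap K (SqrtExt (a : K))
  rw [← Finset.card_univ, ← Finset.card_univ,
    Finset.card_eq_sum_card_fiberwise (f := fun τ : SqrtExt (a : K) →+* ℝ ↦ τ.comp f)
      fun τ _ ↦ Finset.mem_univ (τ.comp f),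
    Finset.card_filter, Finset.mul_sum, ← Finset.sum_add_distrib, mul_comm, ← smul_eq_mul]
  refine Finset.card_nsmul_le_sum _ _ _ fun σ _ ↦ ?_
  split_ifs with ha
  swap; · exact Nat.le_add_left _ _
  obtain ⟨_ | τ, hτ⟩ := Place.exists_comap_algebraMap_eq ha
  · exact absurd hτ Sum.inl_ne_inr
  obtain rfl : τ.comp f = σ := Sum.inr_injective hτ
  have hstar : (τ.comp (starRingEnd _)).comp f = τ.comp f :=
    congrArg τ.comp starRingEnd_comp_algebraMap_sqrtExt
  exact Finset.one_lt_card.mpr ⟨τ.comp (starRingEnd _), by simp [hstar], τ, by simp,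
    fun h ↦ Place.comap_star_ne (q := .inr τ) ha (congrArg _ h)⟩

open scoped Classical in
theorem two_mul_card_le_card_add_card_filter (S : Finset (HeightOneSpectrum (𝓞 K))) :
    2 * (S.card + Fintype.card (InfinitePlace K)) ≤
      (primesAbove (algebraMap K (SqrtExt (a : K))) S).card +
        Fintype.card (InfinitePlace (SqrtExt (a : K))) +
        ((placesOver S).filter fun p ↦ a ∉ p.localSquares).card := by
  have hfin := two_mul_card_le_card_primesAbove_add (a := a) S
  have hreal := two_mul_card_ringHom_real_le (a := a)
  have hfilter : ((placesOver S).filter fun p ↦ a ∉ p.localSquares).card =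
      (S.filter fun v ↦ a ∉ Place.localSquares (.inl v)).card +
        (Finset.univ.filter fun σ : K →+* ℝ ↦ a ∉ Place.localSquares (.inr σ)).card := by
    simp only [Finset.card_filter, placesOver, Finset.sum_disjSum]
  have hrank := Module.finrank_mul_finrank ℚ K (SqrtExt (a : K))
  rw [QuadraticAlgebra.finrank_eq_two, ← InfinitePlace.card_add_two_mul_card_eq_rank,
    ← InfinitePlace.card_add_two_mul_card_eq_rank] at hrank
  rw [card_ringHom_real, card_ringHom_real] at hreal
  rw [InfinitePlace.card_eq_nrRealPlaces_add_nrComplexPlaces,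
    InfinitePlace.card_eq_nrRealPlaces_add_nrComplexPlaces]
  omega

end Counting

section SUnitNorms

theorem valuation_sqrtExt_eq_max {F Γ : Type*} [Field F] [LinearOrderedCommGroupWithZero Γ] {a : F}
    (v : Valuation (SqrtExt a) Γ) (h2 : v 2 = 1) (ha : v (algebraMap F _ a) = 1) {y : SqrtExt a}
    (hy : v (star y) = v y) :
    v y = max (v (algebraMap F _ y.re)) (v (algebraMap F _ y.im)) := by
  have hω : v QuadraticAlgebra.omega = 1 := by
    have hωω : (QuadraticAlgebra.omega : SqrtExt a) ^ 2 = algebraMap F _ a := by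
      ext <;> simp [sq]
    exact (pow_eq_one_iff_of_nonneg zero_le two_ne_zero).mp (by rw [← map_pow, hωω, ha])
  have hre : v (algebraMap F _ y.re) ≤ v y := by
    have h : 2 * algebraMap F (SqrtExt a) y.re = y + star y := by
      rw [two_mul]
      ext <;> simp
    simpa [h2, hy, ← h] using v.map_add y (star y)
  have him : v (algebraMap F _ y.im) ≤ v y := by
    have h : 2 * algebraMap F (SqrtExt a) y.im * QuadraticAlgebra.omega = y - star y := by
      rw [two_mul]
      ext <;> simp
    simpa [h2, hω, hy, ← h] using v.map_sub y (star y)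
  refine le_antisymm ?_ (max_le hre him)
  have h : y = algebraMap F _ y.re + algebraMap F _ y.im * QuadraticAlgebra.omega := by
    ext <;> simp
  conv_lhs => rw [h]
  refine (v.map_add _ _).trans_eq ?_
  rw [map_mul, hω, mul_one]

variable {K : Type*} [Field K] [NumberField K] {a : Kˣ} [Fact (¬IsSquare (a : K))]
  {S : Finset (HeightOneSpectrum (𝓞 K))}

theorem valuation_algebraMap_eq_one {x : K} {w : HeightOneSpectrum (𝓞 (SqrtExt (a : K)))}
    (hx : ∀ v ∉ S, v.valuation K x = 1) (hw : w ∉ primesAbove (algebraMap K (SqrtExt (a : K))) S) :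
    w.valuation _ (algebraMap K (SqrtExt (a : K)) x) = 1 :=
  (valuation_primeComap_eq_one_iff _ w).mpr <| hx _ <| mt (mem_primesAbove _).mpr hw

variable (a S) in
/-- The `S`-units of `K(√a)`: the units outside the primes above `S`. -/
noncomputable abbrev sUnitsSqrtExt : Subgroup (SqrtExt (a : K))ˣ :=
  sUnits (primesAbove (algebraMap K (SqrtExt (a : K))) S)

theorem unitsIncl_mem_sUnits {x : Kˣ} (hx : x ∈ sUnits S) :
    unitsIncl (a : K) x ∈ sUnitsSqrtExt a S :=
  fun _ hw ↦ valuation_algebraMap_eq_one hx hw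

theorem unitsNorm_mem_sUnits {x : (SqrtExt (a : K))ˣ}
    (hx : x ∈ sUnitsSqrtExt a S) :
    unitsNorm (a : K) x ∈ sUnits S := by
  intro v hv
  obtain ⟨w, rfl⟩ := exists_primeComap_eq (algebraMap K (SqrtExt (a : K))) v
  have hw := mt (mem_primesAbove _).mp hv
  refine (valuation_primeComap_eq_one_iff _ w).mp ?_
  change w.valuation _ (algebraMap K _ (x : SqrtExt (a : K)).norm) = 1
  rw [QuadraticAlgebra.algebraMap_norm_eq_mul_star, map_mul, hx w hw, one_mul,
    ← starRingEnd_apply, valuation_primeComap_eq_one_iff (starRingEnd _) w]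
  refine hx _ fun h ↦ hv ?_
  rw [Finset.mem_coe, mem_primesAbove, primeComap_algebraMap_primeComap_star] at h
  exact h

theorem exists_sUnits_mul_star_eq (hS : IsLarge S) (ha : a ∈ sUnits S) {x : (SqrtExt (a : K))ˣ}
    (hx : x ∈ sUnitsSqrtExt a S)
    (hN : unitsNorm (a : K) x = 1) :
    ∃ y ∈ sUnitsSqrtExt a S,
      (x : SqrtExt (a : K)) * star (y : SqrtExt (a : K)) = y := by
  obtain ⟨y, hy⟩ := exists_mul_star_eq_of_unitsNorm_eq_one hN
  have hre_im : (y : SqrtExt (a : K)).re ≠ 0 ∨ (y : SqrtExt (a : K)).im ≠ 0 := by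
    by_contra! h
    exact y.ne_zero (QuadraticAlgebra.ext h.1 h.2)
  obtain ⟨c, hc⟩ := hS.hasTrivialClassGroup.exists_valuation_eq_max hre_im
  refine ⟨y * (unitsIncl (a : K) c)⁻¹, fun w hw ↦ ?_, ?_⟩
  · have hstar : w.valuation _ (star (y : SqrtExt (a : K))) =
        w.valuation _ (y : SqrtExt (a : K)) := by
      conv_rhs => rw [← hy, map_mul, hx w hw, one_mul]
    have hyc : w.valuation _ (y : SqrtExt (a : K)) =
        w.valuation _ (algebraMap K (SqrtExt (a : K)) c) := by
      obtain ⟨e, -, he⟩ := valuation_primeComap (algebraMap K (SqrtExt (a : K))) w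
      have h2 := valuation_algebraMap_eq_one hS.valuation_two hw
      rw [map_ofNat] at h2
      rw [valuation_sqrtExt_eq_max _ h2 (valuation_algebraMap_eq_one ha hw) hstar, he, he, he,
        hc _ (mt (mem_primesAbove _).mpr hw)]
      exact ((pow_left_mono e).map_max).symm
    rw [Units.val_mul, Units.val_inv_eq_inv_val, map_mul, map_inv₀, hyc]
    exact mul_inv_cancel₀ ((Valuation.ne_zero_iff _).mpr (unitsIncl (a : K) c).ne_zero)
  · have hc' : star (unitsIncl (a : K) c : SqrtExt (a : K)) = unitsIncl (a : K) c :=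
      RingHom.congr_fun starRingEnd_comp_algebraMap_sqrtExt (c : K)
    rw [Units.val_mul, Units.val_inv_eq_inv_val, star_mul, star_inv₀, hc', mul_left_comm, hy,
      mul_comm]

theorem isSquare_unitsIncl_iff {b : Kˣ} :
    IsSquare (unitsIncl (a : K) b) ↔ IsSquare b ∨ IsSquare (a * b) := by
  simp only [← isSquare_units_iff]
  exact isSquare_algebraMap_sqrtExt_iff two_ne_zero a.ne_zero

variable (a) in
theorem relIndex_map_unitsNorm_sUnits (hS : IsLarge S) (ha : a ∈ sUnits S) :
    ((sUnitsSqrtExt a S).map (unitsNorm (a : K))).relIndex (sUnits S) *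
        2 ^ ((primesAbove (algebraMap K (SqrtExt (a : K))) S).card +
          Fintype.card (InfinitePlace (SqrtExt (a : K)))) * 2 =
      2 ^ (2 * (S.card + Fintype.card (InfinitePlace K))) := by
  let U := sUnitsSqrtExt a S
  let i : sUnits S →* U :=
    ((unitsIncl (a : K)).comp (sUnits S).subtype).codRestrict U fun x ↦ unitsIncl_mem_sUnits x.2
  let N : U →* sUnits S :=
    ((unitsNorm (a : K)).comp U.subtype).codRestrict _ fun x ↦ unitsNorm_mem_sUnits x.2
  have hker (x : U) (hx : N x = 1) : ∃ y b, x = y ^ 2 * i b := by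
    obtain ⟨y, hy, h⟩ := exists_sUnits_mul_star_eq hS ha x.2 (congrArg Subtype.val hx)
    exact ⟨⟨y, hy⟩, (N ⟨y, hy⟩)⁻¹, Subtype.ext (eq_sq_mul_unitsIncl_of_mul_star_eq h)⟩
  have hrange : N.range = (U.map (unitsNorm (a : K))).subgroupOf (sUnits S) := by
    ext x
    exact ⟨fun ⟨y, hy⟩ ↦ ⟨y, y.2, congrArg Subtype.val hy⟩,
      fun ⟨y, hy, h⟩ ↦ ⟨⟨y, hy⟩, Subtype.ext h⟩⟩
  have hmem (b : sUnits S) : IsSquare (i b) ↔ IsSquare (b : Kˣ) ∨ IsSquare (a * b) :=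
    isSquare_sUnits_iff.trans isSquare_unitsIncl_iff
  have hcomap : (Subgroup.square (sUnits S)).relIndex ((Subgroup.square U).comap i) = 2 := by
    refine Subgroup.relIndex_eq_two_iff_exists_notMem_and.mpr ⟨⟨a, ha⟩,
      (hmem _).mpr (.inr (IsSquare.mul_self a)), fun h ↦ ?_, fun b hb ↦ ?_⟩
    · exact Fact.out (p := ¬IsSquare (a : K)) (isSquare_units_iff.mpr (isSquare_sUnits_iff.mp h))
    · rw [mul_comm]
      exact ((hmem b).mp hb).symm.imp isSquare_sUnits_iff.mpr isSquare_sUnits_iff.mpr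
  have h := index_range_mul_index_square_mul_relIndex i N
    (fun b ↦ Subtype.ext (unitsNorm_unitsIncl _)) hker
  rw [hcomap, index_square_sUnits, index_square_sUnits, hrange, ← pow_mul'] at h
  exact h

variable (a) in
theorem relIndex_map_unitsNorm_sUnits_ne_zero (hS : IsLarge S) (ha : a ∈ sUnits S) :
    ((sUnitsSqrtExt a S).map (unitsNorm (a : K))).relIndex (sUnits S) ≠ 0 := fun h ↦ by
  have h' := relIndex_map_unitsNorm_sUnits a hS ha
  rw [h, zero_mul, zero_mul] at h'
  exact pow_ne_zero _ two_ne_zero h'.symm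

variable (a) in
open scoped Classical in
theorem two_mul_relIndex_map_unitsNorm_sUnits_le (hS : IsLarge S) (ha : a ∈ sUnits S) :
    2 * ((sUnitsSqrtExt a S).map (unitsNorm (a : K))).relIndex (sUnits S) ≤
      2 ^ ((placesOver S).filter fun p ↦ a ∉ p.localSquares).card := by
  have h := relIndex_map_unitsNorm_sUnits a hS ha
  have hle := two_mul_card_le_card_add_card_filter (a := a) S
  refine Nat.le_of_mul_le_mul_left ?_ (pow_pos two_pos
    ((primesAbove (algebraMap K (SqrtExt (a : K))) S).card +
      Fintype.card (InfinitePlace (SqrtExt (a : K)))))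
  rw [← pow_add]
  refine le_trans ?_ (Nat.pow_le_pow_right two_pos hle)
  rw [← h]
  linarith

end SUnitNorms

section Density

variable {K : Type*} [Field K] [NumberField K]

theorem exists_forall_mul_mem_localSquares (S : Finset (Place K)) (y : Place K → Kˣ) :
    ∃ x : Kˣ, ∀ p ∈ S, x * y p ∈ p.localSquares := by
  obtain rfl | ⟨q, hq⟩ := S.eq_empty_or_nonempty
  · exact ⟨1, by simp⟩
  have hy (p : Place K) : p.embedding (y p) ≠ 0 := (map_ne_zero _).mpr (y p).ne_zero
  obtain ⟨x, hx⟩ := Place.exists_forall_embedding_mem S (fun p ↦ p.embedding (y p)) fun p _ ↦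
    (p.eventually_isSquare_mul (hy p)).and (eventually_ne_nhds (hy p))
  have hx0 : x ≠ 0 := (map_ne_zero _).mp (hx q hq).2
  refine ⟨Units.mk0 x hx0, fun p hp ↦ p.mem_localSquares.mpr ?_⟩
  rw [Units.val_mul, Units.val_mk0, map_mul, mul_comm]
  exact (hx p hp).1

theorem index_iInf_of_localSquares_le (T : Finset (Place K)) {H : Place K → Subgroup Kˣ}
    (hH : ∀ p, p.localSquares ≤ H p) : (⨅ p ∈ T, H p).index = ∏ p ∈ T, (H p).index := by
  classical
  induction T using Finset.induction_on with
  | empty => simp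
  | insert q T hq ih =>
    rw [Finset.iInf_insert, Finset.prod_insert hq, ← ih]
    have hsup : H q ⊔ ⨅ p ∈ T, H p = ⊤ := by
      refine eq_top_iff.mpr fun y _ ↦ ?_
      obtain ⟨x, hx⟩ :=
        exists_forall_mul_mem_localSquares (insert q T) fun p ↦ if p = q then 1 else y
      rw [← inv_mul_cancel_left x y]
      refine Subgroup.mul_mem_sup ((H q).inv_mem (hH q ?_)) ?_
      · simpa using hx q (Finset.mem_insert_self q T)
      · refine Subgroup.mem_iInf.mpr fun p ↦ Subgroup.mem_iInf.mpr fun hp ↦ hH p ?_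
        simpa [ne_of_mem_of_not_mem hp hq] using hx p (Finset.mem_insert_of_mem hp)
    rw [← Subgroup.relIndex_mul_index (inf_le_right : H q ⊓ ⨅ p ∈ T, H p ≤ _),
      Subgroup.inf_relIndex_right, ← Subgroup.relIndex_sup_left, hsup, Subgroup.relIndex_top_right]

open scoped Classical in
theorem index_iInf_localNorms (T : Finset (Place K)) (a : Kˣ) :
    (⨅ p ∈ T, p.localNorms (a : K)).index = 2 ^ (T.filter fun p ↦ a ∉ p.localSquares).card := by
  rw [index_iInf_of_localSquares_le T fun p ↦ p.localSquares_le_localNorms _, Finset.card_filter,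
    ← Finset.prod_pow_eq_pow_sum]
  refine Finset.prod_congr rfl fun p _ ↦ ?_
  split_ifs with h
  · rw [p.localNorms_eq_top h, Subgroup.index_top, pow_zero]
  · rw [p.index_localNorms_eq_two h, pow_one]

theorem Place.range_unitsNorm_le_localNorms (p : Place K) (a : K) :
    (unitsNorm a).range ≤ p.localNorms a := fun b hb ↦ by
  obtain ⟨x, y, hxy⟩ := mem_range_unitsNorm.mp hb
  exact p.mem_localNorms.mpr ⟨p.embedding x, p.embedding y, by simp [← hxy]⟩

theorem sUnits_sup_iInf_localNorms_ne_top {S : Finset (HeightOneSpectrum (𝓞 K))} (hS : IsLarge S)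
    {a : Kˣ} (haS : a ∈ sUnits S) (ha : ¬IsSquare a) :
    sUnits S ⊔ ⨅ p ∈ placesOver S, p.localNorms (a : K) ≠ ⊤ := fun htop ↦ by
  classical
  have : Fact (¬IsSquare (a : K)) := ⟨mt isSquare_units_iff.mp ha⟩
  have hidx := index_iInf_localNorms (placesOver S) a
  rw [← Subgroup.relIndex_top_right, ← htop, sup_comm, Subgroup.relIndex_sup_left] at hidx
  have hle := two_mul_relIndex_map_unitsNorm_sUnits_le a hS haS
  have hle' : (sUnitsSqrtExt a S).map (unitsNorm (a : K)) ≤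
      ⨅ p ∈ placesOver S, p.localNorms (a : K) :=
    le_iInf₂ fun p _ ↦ (Subgroup.map_le_range _ _).trans (p.range_unitsNorm_le_localNorms _)
  have hne := relIndex_map_unitsNorm_sUnits_ne_zero a hS haS
  have := Subgroup.relIndex_le_of_le_left hle' hne
  omega

theorem exists_sUnits_sup_eq_top (M : Subgroup Kˣ) [M.FiniteIndex] :
    ∃ S : Finset (HeightOneSpectrum (𝓞 K)), sUnits S ⊔ M = ⊤ := by
  obtain ⟨S, hS⟩ := exists_forall_mem_sUnits fun c : Kˣ ⧸ M ↦ c.out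
  refine ⟨S, eq_top_iff.mpr fun y _ ↦ ?_⟩
  rw [← mul_inv_cancel_left (y : Kˣ ⧸ M).out y]
  exact Subgroup.mul_mem_sup (hS y) (QuotientGroup.eq.mp (Quotient.out_eq _))

theorem exists_notMem_localSquares (S : Finset (HeightOneSpectrum (𝓞 K))) {a : Kˣ}
    (ha : ¬IsSquare a) : ∃ v ∉ S, a ∉ Place.localSquares (.inl v) := by
  classical
  by_contra! hS
  let M := ⨅ p ∈ placesOver S, p.localNorms (a : K)
  have : M.FiniteIndex := ⟨by rw [index_iInf_localNorms]; exact pow_ne_zero _ two_ne_zero⟩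
  obtain ⟨C, hC⟩ := exists_isLarge K
  obtain ⟨T, hT⟩ := exists_sUnits_sup_eq_top M
  obtain ⟨U, hU⟩ := exists_forall_mem_sUnits fun _ : Unit ↦ a
  have hCR : C ⊆ C ∪ (T ∪ U) := Finset.subset_union_left
  have hTR : T ⊆ C ∪ (T ∪ U) := Finset.subset_union_left.trans Finset.subset_union_right
  have hUR : U ⊆ C ∪ (T ∪ U) := Finset.subset_union_right.trans Finset.subset_union_right
  refine sUnits_sup_iInf_localNorms_ne_top (hC.mono hCR) (sUnits_mono hUR (hU ())) ha ?_
  refine top_le_iff.mp (hT.ge.trans (sup_le_sup (sUnits_mono hTR) (le_iInf₂ ?_)))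
  rintro (v | σ) -
  · by_cases hv : v ∈ S
    · exact iInf₂_le _ (inl_mem_placesOver.mpr hv)
    · exact le_top.trans_eq (Place.localNorms_eq_top _ (hS v hv)).symm
  · exact iInf₂_le _ (inr_mem_placesOver S σ)

theorem mul_mem_localSquares_inl {v : HeightOneSpectrum (𝓞 K)} (h2 : v.valuation K 2 = 1)
    {x y : Kˣ} (hx : v.valuation K (x : K) = 1) (hy : v.valuation K (y : K) = 1)
    (hxs : x ∉ Place.localSquares (.inl v)) (hys : y ∉ Place.localSquares (.inl v)) :
    x * y ∈ Place.localSquares (.inl v) := by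
  let i : Kˣ →* (v.adicCompletion K)ˣ := Units.map (algebraMap K (v.adicCompletion K))
  have h : i x * i y ∈ Subgroup.square (v.adicCompletion K)ˣ :=
    mul_mem_square_of_valued_eq_one h2 ((valued_algebraMap_adicCompletion _).trans hx)
      ((valued_algebraMap_adicCompletion _).trans hy) hxs hys
  rw [← map_mul] at h
  exact h

theorem exists_mem_localSquares_and_notMem (S : Finset (HeightOneSpectrum (𝓞 K))) {a b : Kˣ}
    (ha : ¬IsSquare a) (hb : ¬IsSquare b) (hab : ¬IsSquare (a * b)) :
    ∃ v ∉ S, a ∈ Place.localSquares (.inl v) ∧ b ∉ Place.localSquares (.inl v) := by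
  classical
  have : Fact (¬IsSquare (a : K)) := ⟨mt isSquare_units_iff.mp ha⟩
  obtain ⟨T, hT⟩ := exists_forall_mem_sUnits ![a, b, Units.mk0 2 two_ne_zero]
  obtain ⟨w, hw, hbw⟩ := exists_notMem_localSquares
    (primesAbove (algebraMap K (SqrtExt (a : K))) (S ∪ T))
    (mt isSquare_unitsIncl_iff.mp (not_or_intro hb hab))
  rw [mem_primesAbove, Finset.mem_union, not_or] at hw
  have hbv := mt (Place.localSquares_comap_le_comap (q := .inl w)) hbw
  refine ⟨_, hw.1, by_contra fun hav ↦ ?_, hbv⟩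
  have habv := mul_mem_localSquares_inl (hT 2 _ hw.2) (hT 0 _ hw.2) (hT 1 _ hw.2) hav hbv
  have habw := Place.localSquares_comap_le_comap (q := .inl w) habv
  have haw : unitsIncl (a : K) a ∈ Place.localSquares (.inl w) :=
    Place.square_le_localSquares _ (isSquare_unitsIncl_iff.mpr (.inr (.mul_self a)))
  rw [map_mul] at habw
  exact hbw ((Subgroup.mul_mem_cancel_left _ haw).mp habw)

end Density

theorem inf_le_of_two_mul_relIndex_le {G : Type*} [CommGroup G] {N B U : Subgroup G}
    (hNB : N ≤ B ⊓ U) (hN : N.relIndex U ≠ 0) (hNU : 2 * N.relIndex U ≤ B.index)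
    (hBU : (B ⊔ U).index ≤ 2) : B ⊓ U ≤ N := by
  have hmul := Subgroup.relIndex_mul_relIndex _ _ _ hNB inf_le_right
  rw [Subgroup.inf_relIndex_right] at hmul
  have hB := Subgroup.relIndex_mul_index (le_sup_left : B ≤ B ⊔ U)
  rw [Subgroup.relIndex_sup_left] at hB
  rw [← hmul] at hN hNU
  have hle : N.relIndex (B ⊓ U) * B.relIndex U ≤ 1 * B.relIndex U := by
    have := Nat.mul_le_mul_left (B.relIndex U) hBU
    omega
  have hle_one := Nat.le_of_mul_le_mul_right hle (Nat.pos_of_ne_zero (right_ne_zero_of_mul hN))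
  have hpos := Nat.pos_of_ne_zero (left_ne_zero_of_mul hN)
  exact Subgroup.relIndex_eq_one.mp (by omega)

section NormTheorem

variable {K : Type*} [Field K] [NumberField K] {a : Kˣ} {S T : Finset (HeightOneSpectrum (𝓞 K))}

theorem relIndex_localSquares_sUnits_le {v : HeightOneSpectrum (𝓞 K)} (h2 : v.valuation K 2 = 1)
    (hv : v ∉ S) : (Place.localSquares (.inl v)).relIndex (sUnits S) ≤ 2 := by
  by_cases h : sUnits S ≤ Place.localSquares (.inl v)
  · exact (Subgroup.relIndex_eq_one.mpr h).trans_le one_le_two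
  obtain ⟨e, he, hev⟩ := SetLike.not_le_iff_exists.mp h
  refine (Subgroup.relIndex_eq_two_iff_exists_notMem_and.mpr ⟨e, he, hev, fun b hb ↦ ?_⟩).le
  exact or_iff_not_imp_right.mpr fun hbv ↦ mul_mem_localSquares_inl h2 (hb v hv) (he v hv) hbv hev

theorem relIndex_iInf_localSquares_sUnits_le (hS : IsLarge S) (hST : Disjoint S T) :
    (⨅ v ∈ T, Place.localSquares (.inl v)).relIndex (sUnits S) ≤ 2 ^ T.card := by
  classical
  induction T using Finset.induction_on with
  | empty => simp
  | insert v T hv ih =>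
    rw [Finset.disjoint_insert_right] at hST
    rw [Finset.iInf_insert, Finset.card_insert_of_notMem hv, pow_succ']
    exact Subgroup.relIndex_inf_le.trans <| Nat.mul_le_mul
      (relIndex_localSquares_sUnits_le (hS.valuation_two v hST.1) hST.1) (ih hST.2)

theorem exists_mem_inf_sUnits_not_isSquare (haS : a ∈ sUnits S) (ha : ¬IsSquare a)
    {M : Subgroup Kˣ} (hM : Subgroup.square Kˣ ≤ M) (haM : a ∈ M)
    (hidx : 2 * M.relIndex (sUnits S) < 2 ^ (S.card + Fintype.card (InfinitePlace K))) :
    ∃ e ∈ M ⊓ sUnits S, ¬IsSquare e ∧ ¬IsSquare (a * e) := by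
  by_contra! h
  have h2 : (Subgroup.square Kˣ ⊓ sUnits S).relIndex (M ⊓ sUnits S) = 2 := by
    refine Subgroup.relIndex_eq_two_iff_exists_notMem_and.mpr
      ⟨a, ⟨haM, haS⟩, fun h ↦ ha h.1, fun b hb ↦ or_iff_not_imp_right.mpr fun hb' ↦ ?_⟩
    exact ⟨mul_comm a b ▸ h b hb fun hsq ↦ hb' ⟨hsq, hb.2⟩, mul_mem hb.2 haS⟩
  have hmul := Subgroup.relIndex_mul_relIndex _ _ _ (inf_le_inf_right (sUnits S) hM) inf_le_right
  rw [Subgroup.inf_relIndex_right, Subgroup.inf_relIndex_right, relIndex_square_sUnits, h2] at hmul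
  exact hidx.ne hmul

/-- The `S`-units surject onto the product over `v ∈ T` of the units of `K_v` modulo squares. -/
def RepresentsUnits (S T : Finset (HeightOneSpectrum (𝓞 K))) : Prop :=
  ∀ y : Kˣ, (∀ v ∈ T, v.valuation K (y : K) = 1) →
    ∃ e ∈ sUnits S, ∀ v ∈ T, e * y ∈ Place.localSquares (.inl v)

theorem RepresentsUnits.insert [DecidableEq (HeightOneSpectrum (𝓞 K))] (hST : RepresentsUnits S T)
    {v : HeightOneSpectrum (𝓞 K)} (hv : v ∉ S) (h2 : v.valuation K 2 = 1) {e : Kˣ}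
    (heS : e ∈ sUnits S) (heT : ∀ w ∈ T, e ∈ Place.localSquares (.inl w))
    (hev : e ∉ Place.localSquares (.inl v)) : RepresentsUnits S (insert v T) := fun y hy ↦ by
  rw [Finset.forall_mem_insert] at hy
  obtain ⟨d, hd, hdy⟩ := hST y hy.2
  by_cases hv' : d * y ∈ Place.localSquares (.inl v)
  · exact ⟨d, hd, (Finset.forall_mem_insert _ _ _).mpr ⟨hv', hdy⟩⟩
  refine ⟨e * d, mul_mem heS hd, (Finset.forall_mem_insert _ _ _).mpr ⟨?_, fun w hw ↦ ?_⟩⟩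
  · have hval : v.valuation K ((d * y : Kˣ) : K) = 1 := by
      rw [Units.val_mul, map_mul, hd v hv, hy.1, one_mul]
    rw [mul_assoc]
    exact mul_mem_localSquares_inl h2 (heS v hv) hval hev hv'
  · rw [mul_assoc]
    exact mul_mem (heT w hw) (hdy w hw)

theorem exists_representsUnits (hS : IsLarge S) (haS : a ∈ sUnits S) (ha : ¬IsSquare a) {k : ℕ}
    (hk : k < S.card + Fintype.card (InfinitePlace K)) :
    ∃ T : Finset (HeightOneSpectrum (𝓞 K)), Disjoint S T ∧ T.card = k ∧
      (∀ v ∈ T, a ∈ Place.localSquares (.inl v)) ∧ RepresentsUnits S T := by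
  classical
  induction k with
  | zero => exact ⟨∅, by simp, rfl, by simp, fun _ _ ↦ ⟨1, one_mem _, by simp⟩⟩
  | succ k ih =>
    obtain ⟨T, hST, rfl, haT, hT⟩ := ih (by omega)
    let M := ⨅ v ∈ T, Place.localSquares (K := K) (.inl v)
    have hidx : 2 * M.relIndex (sUnits S) < 2 ^ (S.card + Fintype.card (InfinitePlace K)) := by
      have hM : M.relIndex (sUnits S) ≤ 2 ^ T.card :=
        relIndex_iInf_localSquares_sUnits_le hS hST
      have hlt := Nat.pow_lt_pow_right one_lt_two hk
      rw [pow_succ'] at hlt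
      omega
    obtain ⟨e, ⟨heM, heS⟩, he, hae⟩ := exists_mem_inf_sUnits_not_isSquare haS ha
      (le_iInf₂ fun v _ ↦ Place.square_le_localSquares (.inl v))
      (Subgroup.mem_iInf.mpr fun v ↦ Subgroup.mem_iInf.mpr (haT v)) hidx
    obtain ⟨v, hv, hav, hev⟩ := exists_mem_localSquares_and_notMem (S ∪ T) ha he hae
    rw [Finset.mem_union, not_or] at hv
    refine ⟨insert v T, Finset.disjoint_insert_right.mpr ⟨hv.1, hST⟩,
      Finset.card_insert_of_notMem hv.2, (Finset.forall_mem_insert _ _ _).mpr ⟨hav, haT⟩,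
      hT.insert hv.1 (hS.valuation_two v hv.1) heS (fun w hw ↦ ?_) hev⟩
    exact Subgroup.mem_iInf.mp (Subgroup.mem_iInf.mp heM w) hw

theorem RepresentsUnits.isSquare [DecidableEq (HeightOneSpectrum (𝓞 K))] (hS : IsLarge S)
    (hST : Disjoint S T) (hT : RepresentsUnits S T) {x : Kˣ} (hx : x ∈ sUnits (S ∪ T))
    (hxS : ∀ p ∈ placesOver S, x ∈ p.localSquares) : IsSquare x := by
  by_contra hsq
  refine sUnits_sup_iInf_localNorms_ne_top (hS.mono Finset.subset_union_left) hx hsq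
    (eq_top_iff.mpr fun y _ ↦ ?_)
  obtain ⟨c, hc⟩ := hS.hasTrivialClassGroup.exists_valuation_eq
    (f := fun v ↦ if v ∈ T then v.valuation K (y : K) else 1) (fun v ↦ by split_ifs <;> simp)
    (T.finite_toSet.subset fun v hv ↦ by_contra fun hvT ↦ hv (if_neg hvT))
  have hcT {v} (hv : v ∈ T) : v.valuation K (c : K) = v.valuation K (y : K) :=
    (hc v (Finset.disjoint_right.mp hST hv)).trans (if_pos hv)
  have hcS : c ∈ sUnits (S ∪ T) := fun v hv ↦ by
    rw [Finset.mem_coe, Finset.mem_union, not_or] at hv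
    exact (hc v hv.1).trans (if_neg hv.2)
  obtain ⟨e, he, hey⟩ := hT (c⁻¹ * y) fun v hv ↦ by
    rw [Units.val_mul, Units.val_inv_eq_inv_val, map_mul, map_inv₀, hcT hv, inv_mul_cancel₀]
    exact (map_ne_zero _).mpr y.ne_zero
  have hy : y = c * e⁻¹ * (e * (c⁻¹ * y)) := by group
  rw [hy]
  refine Subgroup.mul_mem_sup (mul_mem hcS (inv_mem (sUnits_mono Finset.subset_union_left he)))
    (Subgroup.mem_iInf.mpr fun p ↦ Subgroup.mem_iInf.mpr fun hp ↦ ?_)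
  by_cases hpS : p ∈ placesOver S
  · rw [Place.localNorms_eq_top p (hxS p hpS)]
    trivial
  obtain v | σ := p
  · rw [inl_mem_placesOver, Finset.mem_union] at hp
    rw [inl_mem_placesOver] at hpS
    exact Place.localSquares_le_localNorms _ _ (hey v (hp.resolve_left hpS))
  · exact absurd (inr_mem_placesOver S σ) hpS

theorem index_iInf_localSquares_sup_sUnits [DecidableEq (HeightOneSpectrum (𝓞 K))]
    (hS : IsLarge S) (hST : Disjoint S T) (hT : RepresentsUnits S T)
    (hcard : T.card + 1 = S.card + Fintype.card (InfinitePlace K)) :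
    ((⨅ p ∈ placesOver S, p.localSquares) ⊔ sUnits (S ∪ T)).index = 2 := by
  have hD : (⨅ p ∈ placesOver S, p.localSquares).index =
      4 ^ (S.card + Fintype.card (InfinitePlace K)) := by
    rw [index_iInf_of_localSquares_le _ fun p ↦ le_rfl, prod_index_localSquares hS.valuation_two]
  have hDU : (⨅ p ∈ placesOver S, p.localSquares) ⊓ sUnits (S ∪ T) =
      Subgroup.square Kˣ ⊓ sUnits (S ∪ T) := by
    refine le_antisymm (fun x hx ↦ ⟨hT.isSquare hS hST hx.2 fun p hp ↦ ?_, hx.2⟩)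
      (inf_le_inf_right _ (le_iInf₂ fun p _ ↦ p.square_le_localSquares))
    exact Subgroup.mem_iInf.mp (Subgroup.mem_iInf.mp hx.1 p) hp
  have hmul := Subgroup.relIndex_mul_index (le_sup_left :
    _ ≤ (⨅ p ∈ placesOver S, p.localSquares) ⊔ sUnits (S ∪ T))
  rw [Subgroup.relIndex_sup_left, ← Subgroup.inf_relIndex_right, hDU, Subgroup.inf_relIndex_right,
    relIndex_square_sUnits, Finset.card_union_of_disjoint hST, hD, ← hcard,
    show 4 = 2 ^ 2 from rfl, ← pow_mul] at hmul
  refine Nat.eq_of_mul_eq_mul_left (pow_pos two_pos (2 * T.card + 1)) ?_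
  rw [← pow_succ, show 2 * T.card + 1 = S.card + T.card + Fintype.card (InfinitePlace K) by omega,
    hmul]
  congr 1
  omega

theorem exists_isLarge_mem_sUnits (a b : Kˣ) :
    ∃ S : Finset (HeightOneSpectrum (𝓞 K)), IsLarge S ∧ a ∈ sUnits S ∧ b ∈ sUnits S := by
  classical
  obtain ⟨S, hS⟩ := exists_isLarge K
  obtain ⟨T, hT⟩ := exists_forall_mem_sUnits ![a, b]
  exact ⟨S ∪ T, hS.mono Finset.subset_union_left, sUnits_mono Finset.subset_union_right (hT 0),
    sUnits_mono Finset.subset_union_right (hT 1)⟩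

open scoped Classical in
theorem filter_notMem_localSquares_placesOver_union_subset
    (haT : ∀ v ∈ T, a ∈ Place.localSquares (.inl v)) :
    ((placesOver (S ∪ T)).filter fun p ↦ a ∉ p.localSquares) ⊆
      (placesOver S).filter fun p ↦ a ∉ p.localSquares := by
  rintro (v | σ) hp <;> rw [Finset.mem_filter] at hp ⊢
  · rw [inl_mem_placesOver, Finset.mem_union] at hp
    rw [inl_mem_placesOver]
    exact ⟨hp.1.resolve_right fun hv ↦ hp.2 (haT v hv), hp.2⟩
  · exact ⟨inr_mem_placesOver S σ, hp.2⟩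

variable (a S T) in
theorem map_unitsNorm_sUnits_le [Fact (¬IsSquare (a : K))] :
    (sUnitsSqrtExt a S).map (unitsNorm (a : K)) ≤
      (⨅ p ∈ placesOver T, p.localNorms (a : K)) ⊓ sUnits S := by
  rintro _ ⟨x, hx, rfl⟩
  refine ⟨?_, unitsNorm_mem_sUnits hx⟩
  exact Subgroup.mem_iInf.mpr fun p ↦ Subgroup.mem_iInf.mpr fun _ ↦
    p.range_unitsNorm_le_localNorms _ ⟨x, rfl⟩

/-- Hasse's norm theorem for quadratic extensions. Norms of `R`-units of `K(√a)` form a subgroup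
`N` of `B ⊓ U`; the choice of `T` makes `2 * [U : N] ≤ [Kˣ : B]` and `[Kˣ : B ⊔ U] ≤ 2`, which
forces `N = B ⊓ U`. -/
theorem mem_range_unitsNorm_of_forall_mem_localNorms (a : Kˣ) {b : Kˣ}
    (h : ∀ p : Place K, b ∈ p.localNorms (a : K)) : b ∈ (unitsNorm (a : K)).range := by
  classical
  by_cases ha : IsSquare a
  · rw [range_unitsNorm_eq_top two_ne_zero a.ne_zero (isSquare_units_iff.mpr ha)]
    trivial
  have : Fact (¬IsSquare (a : K)) := ⟨mt isSquare_units_iff.mp ha⟩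
  obtain ⟨S, hS, haS, hbS⟩ := exists_isLarge_mem_sUnits a b
  have hpos : 0 < Fintype.card (InfinitePlace K) := Fintype.card_pos
  obtain ⟨T, hST, hcard, haT, hT⟩ := exists_representsUnits hS haS ha
    (k := S.card + Fintype.card (InfinitePlace K) - 1) (by omega)
  let R := S ∪ T
  have hR : IsLarge R := hS.mono Finset.subset_union_left
  have haR : a ∈ sUnits R := sUnits_mono Finset.subset_union_left haS
  let N := (sUnitsSqrtExt a R).map (unitsNorm (a : K))
  let B := ⨅ p ∈ placesOver S, p.localNorms (a : K)
  let U := sUnits R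
  have hNU : 2 * N.relIndex U ≤ B.index := by
    rw [index_iInf_localNorms]
    exact (two_mul_relIndex_map_unitsNorm_sUnits_le a hR haR).trans <|
      Nat.pow_le_pow_right two_pos <| Finset.card_le_card <|
        filter_notMem_localSquares_placesOver_union_subset haT
  have hBU : (B ⊔ U).index ≤ 2 := by
    refine Nat.le_of_dvd two_pos ?_
    rw [← index_iInf_localSquares_sup_sUnits hS hST hT (by omega)]
    exact Subgroup.index_dvd_of_le (sup_le_sup_right
      (iInf₂_mono fun p _ ↦ p.localSquares_le_localNorms _) _)
  have hb : b ∈ B ⊓ U := ⟨Subgroup.mem_iInf.mpr fun p ↦ Subgroup.mem_iInf.mpr fun _ ↦ h p,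
    sUnits_mono Finset.subset_union_left hbS⟩
  obtain ⟨x, -, hx⟩ := inf_le_of_two_mul_relIndex_le (map_unitsNorm_sUnits_le a R S)
    (relIndex_map_unitsNorm_sUnits_ne_zero a hR haR) hNU hBU hb
  exact ⟨x, hx⟩

end NormTheorem

section Isotropy

variable {ι κ F E : Type*} [Fintype ι] [Fintype κ] [Field F] [Field E]

/-- Isotropy of the diagonal quadratic form `∑ i, a i * X i ^ 2`. -/
def Isotropic {R : Type*} [Semiring R] (a : ι → R) : Prop :=
  ∃ x : ι → R, x ≠ 0 ∧ ∑ i, a i * x i ^ 2 = 0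

theorem Isotropic.map {a : ι → F} (f : F →+* E) (h : Isotropic a) : Isotropic (f ∘ a) := by
  obtain ⟨x, hx, h⟩ := h
  obtain ⟨i, hi⟩ := Function.ne_iff.mp hx
  refine ⟨f ∘ x, fun h0 ↦ hi ((map_eq_zero f).mp (congrFun h0 i)), ?_⟩
  simp only [Function.comp_apply, ← map_pow, ← map_mul, ← map_sum, h, map_zero]

theorem Isotropic.of_comp {a : ι → F} {e : κ → ι} (he : Function.Injective e)
    (h : Isotropic (a ∘ e)) : Isotropic a := by
  obtain ⟨x, hx, h⟩ := h
  refine ⟨Function.extend e x 0, fun h0 ↦ hx (funext fun i ↦ ?_), ?_⟩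
  · rw [← he.extend_apply x 0, h0]
    rfl
  · rw [← h]
    refine (Fintype.sum_of_injective e he _ _ (fun i hi ↦ ?_) fun i ↦ ?_).symm
    · rw [Function.extend_apply' _ _ _ hi, Pi.zero_apply, zero_pow two_ne_zero, mul_zero]
    · rw [he.extend_apply, Function.comp_apply]

theorem not_isotropic_of_subsingleton [Subsingleton ι] {a : ι → F} (ha : ∀ i, a i ≠ 0) :
    ¬Isotropic a := by
  rintro ⟨x, hx, h⟩
  obtain ⟨i, hi⟩ := Function.ne_iff.mp hx
  rw [Fintype.sum_subsingleton _ i] at h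
  exact mul_ne_zero (ha i) (pow_ne_zero 2 hi) h

theorem isotropic_fin_two_iff {a : Fin 2 → F} (ha : ∀ i, a i ≠ 0) :
    Isotropic a ↔ IsSquare (-(a 0 * a 1)) := by
  constructor
  · rintro ⟨x, hx, h⟩
    rw [Fin.sum_univ_two] at h
    have hx0 : x 0 ≠ 0 := fun h0 ↦ hx <| by
      have h1 : x 1 = 0 := by simpa [h0, ha 1] using h
      exact funext (Fin.forall_fin_two.mpr ⟨h0, h1⟩)
    refine ⟨a 1 * x 1 / x 0, ?_⟩
    field_simp
    linear_combination -a 1 * h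
  · rintro ⟨r, hr⟩
    refine ⟨![a 1, r], fun h ↦ ha 1 (congrFun h 0), ?_⟩
    simp only [Fin.sum_univ_two, Matrix.cons_val_zero, Matrix.cons_val_one]
    linear_combination -a 1 * hr

theorem isotropic_fin_three_of_sq_sub_mul_sq_eq {a : Fin 3 → F} (h0 : a 0 ≠ 0) {x y : F}
    (h : x ^ 2 - -(a 0 * a 1) * y ^ 2 = -(a 0 * a 2)) : Isotropic a := by
  refine ⟨![x / a 0, y, 1], fun h ↦ one_ne_zero (congrFun h 2), ?_⟩
  simp only [Fin.sum_univ_three, Matrix.cons_val]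
  field_simp
  linear_combination h

theorem exists_sq_sub_mul_sq_eq_of_eq_mul (h2 : (2 : F) ≠ 0) {α β x y z w : F} (hα : α ≠ 0)
    (h : x ^ 2 - α * y ^ 2 = β * (z ^ 2 - α * w ^ 2)) (hne : x ≠ 0 ∨ y ≠ 0 ∨ z ≠ 0 ∨ w ≠ 0) :
    ∃ s t, s ^ 2 - α * t ^ 2 = β := by
  by_cases hsq : IsSquare α
  · exact exists_sq_sub_mul_sq_eq_of_isSquare h2 hα hsq β
  have hanisotropic {s t : F} (h : s ^ 2 - α * t ^ 2 = 0) : s = 0 ∧ t = 0 := by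
    have ht : t = 0 := by_contra fun ht ↦ hsq ⟨s / t, by field_simp; linear_combination -h⟩
    subst ht
    exact ⟨by simpa using h, rfl⟩
  have hn : z ^ 2 - α * w ^ 2 ≠ 0 := fun hn ↦ by
    obtain ⟨rfl, rfl⟩ := hanisotropic hn
    obtain ⟨rfl, rfl⟩ := hanisotropic (h.trans (by rw [hn, mul_zero]))
    simp at hne
  refine ⟨(x * z - α * y * w) / (z ^ 2 - α * w ^ 2), (y * z - x * w) / (z ^ 2 - α * w ^ 2), ?_⟩
  field_simp
  linear_combination (z ^ 2 - α * w ^ 2) * h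

theorem isotropic_fin_three_iff (h2 : (2 : F) ≠ 0) {a : Fin 3 → F} (ha : ∀ i, a i ≠ 0) :
    Isotropic a ↔ ∃ x y, x ^ 2 - -(a 0 * a 1) * y ^ 2 = -(a 0 * a 2) := by
  refine ⟨fun ⟨x, hx, h⟩ ↦ ?_, fun ⟨x, y, h⟩ ↦ isotropic_fin_three_of_sq_sub_mul_sq_eq (ha 0) h⟩
  rw [Fin.sum_univ_three] at h
  refine exists_sq_sub_mul_sq_eq_of_eq_mul h2 (neg_ne_zero.mpr (mul_ne_zero (ha 0) (ha 1)))
    (x := a 0 * x 0) (y := x 1) (z := x 2) (w := 0) (by linear_combination a 0 * h) ?_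
  by_contra! hx'
  refine hx (funext fun i ↦ ?_)
  fin_cases i
  exacts [(mul_eq_zero.mp hx'.1).resolve_left (ha 0), hx'.2.1, hx'.2.2.1]

theorem isotropic_fin_four_iff_of_isSquare (h2 : (2 : F) ≠ 0) {a : Fin 4 → F}
    (ha : ∀ i, a i ≠ 0) (hd : IsSquare (∏ i, a i)) :
    Isotropic a ↔ Isotropic (a ∘ Fin.castSucc) := by
  refine ⟨fun ⟨x, hx, h⟩ ↦ ?_, Isotropic.of_comp (Fin.castSucc_injective 3)⟩
  refine (isotropic_fin_three_iff h2 fun i ↦ ha _).mpr ?_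
  change ∃ s t, s ^ 2 - -(a 0 * a 1) * t ^ 2 = -(a 0 * a 2)
  rw [Fin.sum_univ_four] at h
  rw [Fin.prod_univ_four] at hd
  obtain ⟨δ, hδ⟩ := hd
  have ha0 := ha 0
  have ha1 := ha 1
  have ha2 := ha 2
  have hδ0 : δ ≠ 0 := fun h0 ↦ by simp [h0, ha] at hδ
  refine exists_sq_sub_mul_sq_eq_of_eq_mul h2 (neg_ne_zero.mpr (mul_ne_zero ha0 ha1))
    (x := a 0 * x 0) (y := x 1) (z := x 2) (w := x 3 * δ / (a 0 * a 1 * a 2)) ?_ ?_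
  · field_simp
    linear_combination a 0 * a 1 * a 2 * h - x 3 ^ 2 * hδ
  · by_contra! hx'
    refine hx (funext fun i ↦ ?_)
    have h3 : x 3 = 0 := by simpa [ha, hδ0] using hx'.2.2.2
    fin_cases i
    exacts [(mul_eq_zero.mp hx'.1).resolve_left ha0, hx'.2.1, hx'.2.2.1, h3]

end Isotropy

section Descent

variable {ι F : Type*} [Fintype ι] [Field F] {a : ι → F}

theorem isSquare_algebraMap_sqrtExt (d : F) : IsSquare (algebraMap F (SqrtExt d) d) :=
  ⟨QuadraticAlgebra.omega, by ext <;> simp⟩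

theorem exists_ne_zero_forall_sum_mul_eq_zero {κ : Type*} [Fintype κ]
    (hcard : Fintype.card κ < Fintype.card ι) (a : ι → F) (w : κ → ι → F) :
    ∃ z : ι → F, z ≠ 0 ∧ ∀ j, ∑ i, a i * w j i * z i = 0 := by
  obtain ⟨z, hz, hz0⟩ := (Submodule.ne_bot_iff _).mp <| LinearMap.ker_ne_bot_of_finrank_lt
    (f := (Matrix.of fun j i ↦ a i * w j i).mulVecLin) (by simpa using hcard)
  exact ⟨z, hz0, congrFun (LinearMap.mem_ker.mp hz)⟩

theorem prod_sum_mul_sq_of_pairwise [DecidableEq ι] {w : Matrix ι ι F}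
    (hw : Pairwise fun j k ↦ ∑ i, a i * w j i * w k i = 0) :
    ∏ j, ∑ i, a i * w j i ^ 2 = w.det ^ 2 * ∏ i, a i := by
  have h : w * Matrix.diagonal a * w.transpose =
      Matrix.diagonal fun j ↦ ∑ i, a i * w j i ^ 2 := by
    ext j k
    rw [Matrix.mul_apply]
    simp only [Matrix.mul_diagonal, Matrix.transpose_apply]
    obtain rfl | hjk := eq_or_ne j k
    · rw [Matrix.diagonal_apply_eq]
      exact Finset.sum_congr rfl fun i _ ↦ by ring
    · rw [Matrix.diagonal_apply_ne _ hjk, ← hw hjk]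
      exact Finset.sum_congr rfl fun i _ ↦ by ring
  rw [← Matrix.det_diagonal, ← h, Matrix.det_mul, Matrix.det_mul, Matrix.det_transpose,
    Matrix.det_diagonal]
  ring

theorem isotropic_of_isSquare_neg_mul {w t : ι → F} (hw : w ≠ 0) (ht : t ≠ 0)
    (hwt : ∑ i, a i * w i * t i = 0)
    (h : IsSquare (-((∑ i, a i * w i ^ 2) * ∑ i, a i * t i ^ 2))) : Isotropic a := by
  by_contra hanisotropic
  have hne {x : ι → F} (hx : x ≠ 0) : ∑ i, a i * x i ^ 2 ≠ 0 := fun h ↦ hanisotropic ⟨x, hx, h⟩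
  obtain ⟨r, hr⟩ := h
  have hpair (c : F) : ∑ i, a i * w i * (c * w i + r * t i) =
      c * ∑ i, a i * w i ^ 2 + r * ∑ i, a i * w i * t i := by
    simp only [Finset.mul_sum, ← Finset.sum_add_distrib]
    exact Finset.sum_congr rfl fun i _ ↦ by ring
  have hvalue (c : F) : ∑ i, a i * (c * w i + r * t i) ^ 2 = c ^ 2 * ∑ i, a i * w i ^ 2 +
      2 * c * r * ∑ i, a i * w i * t i + r ^ 2 * ∑ i, a i * t i ^ 2 := by
    simp only [Finset.mul_sum, ← Finset.sum_add_distrib]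
    exact Finset.sum_congr rfl fun i _ ↦ by ring
  refine hanisotropic ⟨fun i ↦ (∑ i, a i * t i ^ 2) * w i + r * t i, fun h0 ↦ ?_, ?_⟩
  · refine mul_ne_zero (hne ht) (hne hw) ?_
    have h := hpair (∑ i, a i * t i ^ 2)
    rw [hwt, mul_zero, add_zero] at h
    rw [← h]
    exact Finset.sum_eq_zero fun i _ ↦ mul_eq_zero_of_right _ (congrFun h0 i)
  · rw [hvalue, hwt]
    linear_combination -(∑ i, a i * t i ^ 2) * hr

theorem Isotropic.exists_re_im (h2 : (2 : F) ≠ 0) {d : F}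
    (h : Isotropic fun i ↦ algebraMap F (SqrtExt d) (a i)) (ha : ¬Isotropic a) :
    ∃ u v : ι → F, v ≠ 0 ∧ ∑ i, a i * u i * v i = 0 ∧
      ∑ i, a i * u i ^ 2 = -(d * ∑ i, a i * v i ^ 2) := by
  obtain ⟨x, hx, h⟩ := h
  let u i := (x i).re
  let v i := (x i).im
  have hre (i) : (algebraMap F (SqrtExt d) (a i) * x i ^ 2).re =
      a i * u i ^ 2 + d * (a i * v i ^ 2) := by
    simp only [sq, QuadraticAlgebra.re_mul, QuadraticAlgebra.im_mul,
      QuadraticAlgebra.algebraMap_re, QuadraticAlgebra.algebraMap_im, u, v]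
    ring
  have him (i) : (algebraMap F (SqrtExt d) (a i) * x i ^ 2).im = 2 * (a i * u i * v i) := by
    simp only [sq, QuadraticAlgebra.re_mul, QuadraticAlgebra.im_mul,
      QuadraticAlgebra.algebraMap_re, QuadraticAlgebra.algebraMap_im, u, v]
    ring
  have hre_sum := congrArg (QuadraticAlgebra.reₗ d 0) h
  have him_sum := congrArg (QuadraticAlgebra.imₗ d 0) h
  simp only [map_sum, map_zero, QuadraticAlgebra.reₗ_apply,
    QuadraticAlgebra.imₗ_apply, hre, him, Finset.sum_add_distrib, ← Finset.mul_sum]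
    at hre_sum him_sum
  refine ⟨u, v, fun hv ↦ ha ⟨u, fun hu ↦ hx (funext fun i ↦ ?_), ?_⟩,
    (mul_eq_zero.mp him_sum).resolve_left h2, eq_neg_of_add_eq_zero_left hre_sum⟩
  · exact QuadraticAlgebra.ext (congrFun hu i) (congrFun hv i)
  · simpa [hv] using hre_sum

/-- If `x = u + v√d` is isotropic, then the orthogonal complement of `u` and `v` is a binary form
of discriminant `-1`, hence isotropic. -/
theorem Isotropic.of_sqrtExt_fin_four (h2 : (2 : F) ≠ 0) {a : Fin 4 → F}
    (hd : ∏ i, a i ≠ 0) (h : Isotropic fun i ↦ algebraMap F (SqrtExt (∏ i, a i)) (a i)) :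
    Isotropic a := by
  by_contra hanisotropic
  obtain ⟨u, v, hv, huv, hQu⟩ := h.exists_re_im h2 hanisotropic
  obtain ⟨w, hw, hw'⟩ := exists_ne_zero_forall_sum_mul_eq_zero (by simp) a ![u, v]
  obtain ⟨t, ht, ht'⟩ := exists_ne_zero_forall_sum_mul_eq_zero (by simp) a ![u, v, w]
  have hpair : Pairwise fun j k ↦ ∑ i, a i * Matrix.of ![u, v, w, t] j i *
      Matrix.of ![u, v, w, t] k i = 0 := by
    intro j k hjk
    wlog hlt : j < k generalizing j k
    · rw [← this hjk.symm (hjk.lt_or_gt.resolve_left hlt)]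
      exact Finset.sum_congr rfl fun i _ ↦ by ring
    fin_cases j <;> fin_cases k <;> first | exact absurd hlt (by decide) | skip
    exacts [huv, hw' 0, ht' 0, hw' 1, ht' 1, ht' 2]
  have hprod := prod_sum_mul_sq_of_pairwise hpair
  simp only [Fin.prod_univ_four, Matrix.of_apply, Matrix.cons_val, hQu] at hprod
  refine hanisotropic (isotropic_of_isSquare_neg_mul hw ht (ht' 2)
    ⟨(Matrix.of ![u, v, w, t]).det / ∑ i, a i * v i ^ 2, ?_⟩)
  have hQv : ∑ i, a i * v i ^ 2 ≠ 0 := fun h ↦ hanisotropic ⟨v, hv, h⟩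
  field_simp
  refine mul_left_cancel₀ hd ?_
  rw [Fin.prod_univ_four]
  linear_combination hprod

end Descent

section UnitForms

open Valued

open Polynomial in
theorem exists_mul_sq_add_mul_sq_eq_of_finite {k : Type*} [Field k] [Finite k]
    (h2 : (2 : k) ≠ 0) {a b : k} (ha : a ≠ 0) (hb : b ≠ 0) (c : k) :
    ∃ x y, a * x ^ 2 + b * y ^ 2 = c := by
  let := Fintype.ofFinite k
  have hchar : ringChar k ≠ 2 := fun h ↦ h2 <| by
    have := ringChar.Nat.cast_ringChar (R := k)
    rwa [h, Nat.cast_ofNat] at this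
  have hdeg : (C b * X ^ 2 - C c).degree = 2 := by
    rw [degree_sub_eq_left_of_degree_lt] <;> rw [degree_C_mul_X_pow 2 hb]
    · rfl
    · exact degree_C_le.trans_lt (by norm_num)
  obtain ⟨x, y, hxy⟩ := FiniteField.exists_root_sum_quadratic (degree_C_mul_X_pow 2 ha) hdeg
    (FiniteField.odd_card_of_char_ne_two hchar)
  refine ⟨x, y, ?_⟩
  simp only [eval_mul, eval_sub, eval_C, eval_pow, eval_X] at hxy
  linear_combination hxy

variable {K : Type*} [Field K] [NumberField K] {v : HeightOneSpectrum (𝓞 K)}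

theorem exists_norm_sum_lt_one (h2 : ‖(2 : v.adicCompletion K)‖ = 1)
    {a b : v.adicCompletion K} (ha : ‖a‖ = 1) (hb : ‖b‖ = 1) {c : v.adicCompletion K}
    (hc : ‖c‖ ≤ 1) : ∃ x y, ‖a * x ^ 2 + b * y ^ 2 - c‖ < 1 := by
  have hlift {z : v.adicCompletion K} (hz : ‖z‖ ≤ 1) : ∃ w : 𝒪[v.adicCompletion K], w.1 = z :=
    ⟨⟨z, Valued.toNormedField.norm_le_one_iff.mp hz⟩, rfl⟩
  obtain ⟨a, rfl⟩ := hlift ha.le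
  obtain ⟨b, rfl⟩ := hlift hb.le
  obtain ⟨c, rfl⟩ := hlift hc
  have hne {z : 𝒪[v.adicCompletion K]} (hz : ‖z.1‖ = 1) : IsLocalRing.residue _ z ≠ 0 := fun h ↦
    ((residue_eq_zero_iff_norm_lt_one v z).mp h).ne hz
  have h2' : (2 : 𝓀[v.adicCompletion K]) ≠ 0 := by
    rw [← map_ofNat (IsLocalRing.residue _) 2]
    exact hne h2
  obtain ⟨x, y, hxy⟩ := exists_mul_sq_add_mul_sq_eq_of_finite h2' (hne ha) (hne hb)
    (IsLocalRing.residue _ c)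
  obtain ⟨x, rfl⟩ := IsLocalRing.residue_surjective x
  obtain ⟨y, rfl⟩ := IsLocalRing.residue_surjective y
  have hres : IsLocalRing.residue _ (a * x ^ 2 + b * y ^ 2 - c) = 0 := by
    simp only [map_sub, map_add, map_mul, map_pow, hxy, sub_self]
  exact ⟨x, y, mod_cast (residue_eq_zero_iff_norm_lt_one v _).mp hres⟩

theorem isotropic_fin_three_of_norm_eq_one (h2 : ‖(2 : v.adicCompletion K)‖ = 1)
    {a : Fin 3 → v.adicCompletion K} (ha : ∀ i, ‖a i‖ = 1) : Isotropic a := by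
  obtain ⟨x, y, hxy⟩ := exists_norm_sum_lt_one h2 (ha 0) (ha 1) ((norm_neg (a 2)).trans (ha 2)).le
  have ha2 : a 2 ≠ 0 := norm_ne_zero_iff.mp (ha 2 ▸ one_ne_zero)
  obtain ⟨z, hz⟩ : ∃ z, a 2 * z = -(a 0 * x ^ 2 + a 1 * y ^ 2) := ⟨_, mul_div_cancel₀ _ ha2⟩
  have hz1 : ‖1 - z‖ < 1 := by
    rwa [show a 0 * x ^ 2 + a 1 * y ^ 2 - -a 2 = a 2 * (1 - z) by linear_combination hz, norm_mul,
      ha 2, one_mul] at hxy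
  have hznorm : ‖z‖ = 1 := by
    rw [norm_eq_of_norm_sub_lt (hz1.trans_eq norm_one.symm), norm_one]
  obtain ⟨r, rfl⟩ : IsSquare z := isSquare_of_norm_sub_sq_lt (y := 1) <| by
    rwa [one_pow, norm_sub_rev, show (4 : v.adicCompletion K) = 2 * 2 by norm_num, norm_mul,
      norm_mul, h2, hznorm, mul_one, mul_one]
  refine ⟨![x, y, r], fun h ↦ ?_, ?_⟩
  · have hr : r = 0 := congrFun h 2
    simp [hr] at hznorm
  · simp only [Fin.sum_univ_three, Matrix.cons_val]
    linear_combination hz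

end UnitForms

section ConsForms

open Matrix

variable {F : Type*} [Field F] {n : ℕ} {g : Fin n → F} {a b c : F}

theorem comp_vecCons {α β : Type*} (f : α → β) (x : α) (y : Fin n → α) :
    f ∘ vecCons x y = vecCons (f x) (f ∘ y) :=
  Fin.comp_cons f x y

theorem isotropic_vecCons_iff : Isotropic (vecCons c g) ↔
    ∃ (x : F) (y : Fin n → F), (x ≠ 0 ∨ y ≠ 0) ∧ c * x ^ 2 + ∑ i, g i * y i ^ 2 = 0 := by
  constructor
  · rintro ⟨x, hx, h⟩
    rw [Fin.sum_univ_succ] at h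
    refine ⟨x 0, x ∘ Fin.succ, ?_, h⟩
    by_contra! h0
    exact hx (funext <| Fin.cases h0.1 (congrFun h0.2))
  · rintro ⟨x, y, hxy, h⟩
    refine ⟨vecCons x y, fun h0 ↦ ?_, by rwa [Fin.sum_univ_succ]⟩
    exact hxy.elim (· (congrFun h0 0)) (· (funext fun i ↦ congrFun h0 i.succ))

theorem Isotropic.vecCons_of_isSquare_mul {d : F} (hc : c ≠ 0) (hd : d ≠ 0)
    (hcd : IsSquare (c * d)) (h : Isotropic (vecCons c g)) : Isotropic (vecCons d g) := by
  rw [isotropic_vecCons_iff] at h ⊢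
  obtain ⟨x, y, hxy, h⟩ := h
  obtain ⟨r, hr⟩ := hcd
  have hr0 : r ≠ 0 := left_ne_zero_of_mul (hr ▸ mul_ne_zero hc hd)
  refine ⟨r / d * x, y, hxy.imp_left (mul_ne_zero (div_ne_zero hr0 hd)), ?_⟩
  rw [← h, mul_pow, div_pow, sq r, ← hr]
  field_simp

theorem Isotropic.vecCons_vecCons (hab : ∃ x y, a * x ^ 2 + b * y ^ 2 = c) (hc : c ≠ 0)
    (h : Isotropic (vecCons c g)) : Isotropic (vecCons a (vecCons b g)) := by
  obtain ⟨x, y, rfl⟩ := hab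
  obtain ⟨z, w, hzw, h⟩ := isotropic_vecCons_iff.mp h
  refine ⟨vecCons (x * z) (vecCons (y * z) w), fun h0 ↦ ?_, ?_⟩
  · have hw : w = 0 := funext fun i ↦ congrFun h0 i.succ.succ
    have hz := hzw.resolve_right (not_not.mpr hw)
    have hx : x = 0 := (mul_eq_zero.mp (congrFun h0 0)).resolve_right hz
    have hy : y = 0 := (mul_eq_zero.mp (congrFun h0 1)).resolve_right hz
    simp [hx, hy] at hc
  · simp only [Fin.sum_univ_succ, cons_val_zero, cons_val_succ]
    linear_combination h

theorem exists_mul_sq_add_mul_sq_eq (h2 : (2 : F) ≠ 0) (ha : a ≠ 0) (hb : b ≠ 0) {x y : F}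
    (hxy : x ≠ 0 ∨ y ≠ 0) (h : a * x ^ 2 + b * y ^ 2 = 0) (c : F) :
    ∃ z w, a * z ^ 2 + b * w ^ 2 = c := by
  have hsq : IsSquare (-(a * b)) := by
    refine (isotropic_fin_two_iff (a := ![a, b]) (Fin.forall_fin_two.mpr ⟨ha, hb⟩)).mp
      ⟨![x, y], fun h0 ↦ ?_, by simpa⟩
    exact hxy.elim (· (congrFun h0 0)) (· (congrFun h0 1))
  obtain ⟨z, w, hzw⟩ :=
    exists_sq_sub_mul_sq_eq_of_isSquare h2 (neg_ne_zero.mpr (mul_ne_zero ha hb)) hsq (a * c)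
  refine ⟨z / a, w, ?_⟩
  field_simp
  linear_combination hzw

theorem Isotropic.exists_vecCons (h2 : (2 : F) ≠ 0) (ha : a ≠ 0) (hb : b ≠ 0)
    {i : Fin n} (hi : g i ≠ 0) (h : Isotropic (vecCons a (vecCons b g))) :
    ∃ x y, a * x ^ 2 + b * y ^ 2 ≠ 0 ∧ Isotropic (vecCons (a * x ^ 2 + b * y ^ 2) g) := by
  obtain ⟨x, hx, h⟩ := h
  simp only [Fin.sum_univ_succ, cons_val_zero, cons_val_succ, Fin.succ_zero_eq_one,
    ← add_assoc] at h
  obtain hc | hc := ne_or_eq (a * x 0 ^ 2 + b * x 1 ^ 2) 0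
  · exact ⟨x 0, x 1, hc, isotropic_vecCons_iff.mpr ⟨1, fun i ↦ x i.succ.succ, .inl one_ne_zero,
      by rwa [one_pow, mul_one]⟩⟩
  obtain hx01 | hx01 : (x 0 ≠ 0 ∨ x 1 ≠ 0) ∨ x 0 = 0 ∧ x 1 = 0 := by tauto
  · obtain ⟨z, w, hzw⟩ := exists_mul_sq_add_mul_sq_eq h2 ha hb hx01 hc (-g i)
    refine ⟨z, w, hzw ▸ neg_ne_zero.mpr hi, ?_⟩
    refine hzw ▸ isotropic_vecCons_iff.mpr ⟨1, Pi.single i 1, .inl one_ne_zero, ?_⟩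
    simp [Pi.single_apply]
  · refine ⟨1, 0, by simpa, isotropic_vecCons_iff.mpr ⟨0, fun i ↦ x i.succ.succ, .inr ?_, ?_⟩⟩
    · exact fun h0 ↦ hx (funext <| Fin.cases hx01.1 <| Fin.cases hx01.2 (congrFun h0))
    · simpa [hc] using h

end ConsForms

section WeakApproximation

open Matrix Topology

variable {K : Type*} [Field K] [NumberField K] {n : ℕ} {g : Fin n → K} {a b : K}

theorem exists_forall_isSquare_mul (S : Finset (Place K)) {x y : ∀ p : Place K, p.Completion}
    (hxy : ∀ p, p.embedding a * x p ^ 2 + p.embedding b * y p ^ 2 ≠ 0) :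
    ∃ z w : K, ∀ p ∈ S, a * z ^ 2 + b * w ^ 2 ≠ 0 ∧
      IsSquare ((p.embedding a * x p ^ 2 + p.embedding b * y p ^ 2) *
        p.embedding (a * z ^ 2 + b * w ^ 2)) := by
  let f (p : Place K) (t : p.Completion × p.Completion) :=
    p.embedding a * t.1 ^ 2 + p.embedding b * t.2 ^ 2
  have hf (p : Place K) : ∀ᶠ t in 𝓝 (x p, y p), f p t ≠ 0 ∧ IsSquare (f p (x p, y p) * f p t) := by
    have hcont : Continuous (f p) := by fun_prop
    exact (hcont.tendsto (x p, y p)).eventually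
      ((eventually_ne_nhds (hxy p)).and (p.eventually_isSquare_mul (hxy p)))
  choose U hU V hV hUV using fun p ↦ mem_nhds_prod_iff.mp (hf p)
  obtain ⟨z, hz⟩ := Place.exists_forall_embedding_mem S x fun p _ ↦ hU p
  obtain ⟨w, hw⟩ := Place.exists_forall_embedding_mem S y fun p _ ↦ hV p
  refine ⟨z, w, fun p hp ↦ ?_⟩
  obtain ⟨hne, hsq⟩ := hUV p (Set.mk_mem_prod (hz p hp) (hw p hp))
  have hmap : f p (p.embedding z, p.embedding w) = p.embedding (a * z ^ 2 + b * w ^ 2) := by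
    simp only [f, map_add, map_mul, map_pow]
  rw [hmap] at hne hsq
  exact ⟨(map_ne_zero _).mp hne, hsq⟩

theorem exists_forall_isotropic_vecCons (ha : a ≠ 0) (hb : b ≠ 0) {i : Fin n} (hi : g i ≠ 0)
    (h : ∀ p : Place K, Isotropic (p.embedding ∘ vecCons a (vecCons b g)))
    {S : Finset (Place K)} (hS : S.Nonempty) :
    ∃ c ≠ 0, (∃ z w, a * z ^ 2 + b * w ^ 2 = c) ∧
      ∀ p ∈ S, Isotropic (p.embedding ∘ vecCons c g) := by
  have hlocal (p : Place K) := (by simpa only [comp_vecCons] using h p :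
    Isotropic (vecCons (p.embedding a) (vecCons (p.embedding b) (p.embedding ∘ g)))).exists_vecCons
      two_ne_zero ((map_ne_zero _).mpr ha) ((map_ne_zero _).mpr hb) (i := i)
      ((map_ne_zero _).mpr hi)
  choose x y hxy hiso using hlocal
  obtain ⟨z, w, hzw⟩ := exists_forall_isSquare_mul S hxy
  obtain ⟨q, hq⟩ := hS
  have hc := (hzw q hq).1
  refine ⟨_, hc, ⟨z, w, rfl⟩, fun p hp ↦ ?_⟩
  rw [comp_vecCons]
  exact (hiso p).vecCons_of_isSquare_mul (hxy p) ((map_ne_zero _).mpr hc) (hzw p hp).2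

theorem norm_algebraMap_adicCompletion_eq_one {v : HeightOneSpectrum (𝓞 K)} {x : K}
    (hx : v.valuation K x = 1) : ‖algebraMap K (v.adicCompletion K) x‖ = 1 := by
  rw [← norm_one (α := v.adicCompletion K), ← map_one (algebraMap K (v.adicCompletion K))]
  exact le_antisymm (norm_algebraMap_adicCompletion_le_iff.mpr (by rw [hx, map_one]))
    (norm_algebraMap_adicCompletion_le_iff.mpr (by rw [hx, map_one]))

theorem exists_finset_forall_notMem_isotropic (hn : 3 ≤ n) (hg : ∀ i, g i ≠ 0) :
    ∃ S : Finset (Place K), ∀ p ∉ S, Isotropic (p.embedding ∘ g) := by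
  obtain ⟨T, hT⟩ := exists_forall_mem_sUnits fun i : Option (Fin n) ↦
    i.elim (Units.mk0 2 two_ne_zero) fun i ↦ Units.mk0 (g i) (hg i)
  refine ⟨placesOver T, fun p hp ↦ ?_⟩
  cases p with
  | inr σ => exact absurd (inr_mem_placesOver T σ) hp
  | inl v =>
    have hv := fun i ↦ hT i v (inl_mem_placesOver.not.mp hp)
    refine Isotropic.of_comp (Fin.castLE_injective hn)
      (isotropic_fin_three_of_norm_eq_one (v := v) ?_ fun i ↦ ?_)
    · exact (congrArg norm (map_ofNat (algebraMap K (v.adicCompletion K)) 2)).symm.trans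
        (norm_algebraMap_adicCompletion_eq_one (hv none))
    · exact norm_algebraMap_adicCompletion_eq_one (hv (some (Fin.castLE hn i)))

end WeakApproximation

section LocalGlobal

open Matrix

universe u

variable {K : Type u} [Field K] [NumberField K]

instance : Nonempty (Place K) := by
  obtain ⟨P, hP, hPrime⟩ := Ring.not_isField_iff_exists_prime.mp (RingOfIntegers.not_isField K)
  exact ⟨.inl ⟨P, hPrime, hP⟩⟩

theorem isSquare_of_forall_place {x : K} (hx : x ≠ 0)
    (h : ∀ p : Place K, IsSquare (p.embedding x)) : IsSquare x := by
  by_contra hsq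
  obtain ⟨v, -, hv⟩ := exists_notMem_localSquares ∅ (a := Units.mk0 x hx)
    (mt isSquare_units_iff.mpr hsq)
  exact hv ((Place.mem_localSquares _).mpr (h _))

theorem exists_sq_sub_mul_sq_eq_of_forall_place {a b : K} (ha : a ≠ 0) (hb : b ≠ 0)
    (h : ∀ p : Place K, ∃ x y, x ^ 2 - p.embedding a * y ^ 2 = p.embedding b) :
    ∃ x y, x ^ 2 - a * y ^ 2 = b :=
  mem_range_unitsNorm.mp <| mem_range_unitsNorm_of_forall_mem_localNorms (Units.mk0 a ha)
    (b := Units.mk0 b hb) fun p ↦ (p.mem_localNorms).mpr (h p)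

theorem isotropic_fin_two_of_forall_place {a : Fin 2 → K} (ha : ∀ i, a i ≠ 0)
    (h : ∀ p : Place K, Isotropic (p.embedding ∘ a)) : Isotropic a := by
  refine (isotropic_fin_two_iff ha).mpr <|
    isSquare_of_forall_place (neg_ne_zero.mpr (mul_ne_zero (ha 0) (ha 1))) fun p ↦ ?_
  rw [map_neg, map_mul]
  exact (isotropic_fin_two_iff fun i ↦ (map_ne_zero _).mpr (ha i)).mp (h p)

theorem isotropic_fin_three_of_forall_place {a : Fin 3 → K} (ha : ∀ i, a i ≠ 0)
    (h : ∀ p : Place K, Isotropic (p.embedding ∘ a)) : Isotropic a := by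
  refine (isotropic_fin_three_iff two_ne_zero ha).mpr <|
    exists_sq_sub_mul_sq_eq_of_forall_place (neg_ne_zero.mpr (mul_ne_zero (ha 0) (ha 1)))
      (neg_ne_zero.mpr (mul_ne_zero (ha 0) (ha 2))) fun p ↦ ?_
  simp only [map_neg, map_mul]
  exact (isotropic_fin_three_iff two_ne_zero fun i ↦ (map_ne_zero _).mpr (ha i)).mp (h p)

theorem isotropic_fin_four_of_forall_place_of_isSquare {a : Fin 4 → K} (ha : ∀ i, a i ≠ 0)
    (hd : IsSquare (∏ i, a i)) (h : ∀ p : Place K, Isotropic (p.embedding ∘ a)) :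
    Isotropic a := by
  refine (isotropic_fin_four_iff_of_isSquare two_ne_zero ha hd).mpr <|
    isotropic_fin_three_of_forall_place (fun i ↦ ha _) fun p ↦ ?_
  refine (isotropic_fin_four_iff_of_isSquare two_ne_zero (fun i ↦ (map_ne_zero _).mpr (ha i))
    ?_).mp (h p)
  simpa only [Function.comp_apply, map_prod] using hd.map p.embedding

theorem isotropic_comp_of_forall_place {ι L : Type*} [Fintype ι] [Field L] [NumberField L]
    (f : K →+* L) {a : ι → K} (h : ∀ p : Place K, Isotropic (p.embedding ∘ a)) (q : Place L) :
    Isotropic (q.embedding ∘ f ∘ a) := by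
  obtain ⟨g, -, hg⟩ := q.exists_completion_ringHom f
  simpa only [Function.comp_def, hg] using (h (q.comap f)).map g

theorem isotropic_fin_four_of_forall_place {a : Fin 4 → K} (ha : ∀ i, a i ≠ 0)
    (h : ∀ p : Place K, Isotropic (p.embedding ∘ a)) : Isotropic a := by
  by_cases hd : IsSquare (∏ i, a i)
  · exact isotropic_fin_four_of_forall_place_of_isSquare ha hd h
  have hd0 : ∏ i, a i ≠ 0 := Finset.prod_ne_zero_iff.mpr fun i _ ↦ ha i
  have : Fact (¬IsSquare (∏ i, a i)) := ⟨hd⟩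
  let f := algebraMap K (SqrtExt (∏ i, a i))
  refine Isotropic.of_sqrtExt_fin_four two_ne_zero hd0 <|
    isotropic_fin_four_of_forall_place_of_isSquare (a := f ∘ a)
      (fun i ↦ (map_ne_zero f).mpr (ha i)) ?_ (isotropic_comp_of_forall_place f h)
  simpa only [Function.comp_apply, ← map_prod] using isSquare_algebraMap_sqrtExt (∏ i, a i)

theorem isotropic_vecCons_vecCons_of_forall_place {n : ℕ} (hn : 3 ≤ n) {a b : K} {g : Fin n → K}
    (ha : a ≠ 0) (hb : b ≠ 0) (hg : ∀ i, g i ≠ 0)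
    (ih : ∀ c ≠ 0, (∀ p : Place K, Isotropic (p.embedding ∘ vecCons c g)) →
      Isotropic (vecCons c g))
    (h : ∀ p : Place K, Isotropic (p.embedding ∘ vecCons a (vecCons b g))) :
    Isotropic (vecCons a (vecCons b g)) := by
  classical
  obtain ⟨S, hS⟩ := exists_finset_forall_notMem_isotropic hn hg
  let q := Classical.arbitrary (Place K)
  obtain ⟨c, hc, hab, hcS⟩ := exists_forall_isotropic_vecCons ha hb (hg ⟨0, by omega⟩) h
    (Finset.insert_nonempty q S)
  refine (ih c hc fun p ↦ ?_).vecCons_vecCons hab hc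
  by_cases hp : p ∈ S
  · exact hcS p (Finset.mem_insert_of_mem hp)
  · exact Isotropic.of_comp (Fin.succ_injective n) (hS p hp)

theorem isotropic_of_forall_place : ∀ {m : ℕ} {a : Fin m → K}, (∀ i, a i ≠ 0) →
    (∀ p : Place K, Isotropic (p.embedding ∘ a)) → Isotropic a
  | 0, _, ha, h | 1, _, ha, h =>
    absurd (h (Classical.arbitrary _))
      (not_isotropic_of_subsingleton fun i ↦ (map_ne_zero _).mpr (ha i))
  | 2, _, ha, h => isotropic_fin_two_of_forall_place ha h
  | 3, _, ha, h => isotropic_fin_three_of_forall_place ha h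
  | 4, _, ha, h => isotropic_fin_four_of_forall_place ha h
  | n + 5, a, ha, h => by
    have hcons : a = vecCons (a 0) (vecCons (a 1) fun i : Fin (n + 3) ↦ a i.succ.succ) :=
      funext <| Fin.cases rfl <| Fin.cases rfl fun _ ↦ rfl
    rw [hcons] at h ⊢
    exact isotropic_vecCons_vecCons_of_forall_place (by omega) (ha 0) (ha 1) (fun i ↦ ha _)
      (fun c hc ↦ isotropic_of_forall_place (Fin.cases hc fun i ↦ ha _)) h

end LocalGlobal

end HasseMinkowski

/-- Hasse–Minkowski: a diagonal quadratic form with nonzero coefficients over a number field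
`K` is isotropic over `K` iff it is isotropic over `ℝ` for every real embedding of `K` and
isotropic over the completion `K_v` for every finite place `v` of `K`. -/
theorem hasse_minkowski_diagonal
    (K : Type*) [Field K] [NumberField K] (m : ℕ) (hm : 1 ≤ m)
    (a : Fin m → K) (ha : ∀ i, a i ≠ 0) :
    (∃ x : Fin m → K, x ≠ 0 ∧ (∑ i, a i * x i ^ 2) = 0) ↔
      ((∀ σ : K →+* ℝ, ∃ x : Fin m → ℝ, x ≠ 0 ∧ (∑ i, σ (a i) * x i ^ 2) = 0) ∧
        (∀ v : HeightOneSpectrum (𝓞 K),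
          ∃ x : Fin m → v.adicCompletion K, x ≠ 0 ∧
            (∑ i, algebraMap K (v.adicCompletion K) (a i) * x i ^ 2) = 0)) := by
  constructor
  · intro (h : HasseMinkowski.Isotropic a)
    exact ⟨fun σ ↦ h.map σ, fun v ↦ h.map (algebraMap K (v.adicCompletion K))⟩
  · rintro ⟨hreal, hfinite⟩
    refine HasseMinkowski.isotropic_of_forall_place ha fun p ↦ ?_
    cases p with
    | inl v => exact hfinite v
    | inr σ =>
      have hσ : HasseMinkowski.Isotropic (σ ∘ a) := hreal σ
      exact hσ.map ULift.ringEquiv.symm.toRingHom
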